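/- arXiv:1302.6375 — 8 statements merged into one kernel-verified Lean document; each statement's English description precedes it below -/
import Mathlib

section
/- Let f : ℝ → ℝ be an odd, 2π-periodic function that is integrable on [0, 2π], with Fourier sine coefficients b_n = (1/π)∫₀^{2π} f(t) sin(nt) dt for n ≥ 1. Then for every λ > 0 the improper integral ∫₀^∞ t·f(t)/(λ² + t²) dt converges and equals (π/2)·Σ_{n=1}^∞ b_n e^{−nλ}. -/
open MeasureTheory Filter Topology

/-!
Write `g(t) = t / (l² + t²)` and `c = 2π`. Oddness and periodicity of `f`, through the reflection
`t ↦ c - t`, turn the integral of `f g` over the `k`-th period `[ck, c(k+1)]` into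
`½ ∫₀ᶜ f(t) (g(t + ck) + g(t - c(k+1))) dt` (`integral_period_eq`). The bracket equals
`g(t + ck) - g(c(k+1) - t)`, which is `O(1/k²)` uniformly in `t ∈ [0, c]`
(`abs_conjKernel_sub_le`), so the sum over `k` may be taken inside the integral.

The periodised kernel is computed in `tendsto_sum_conjKernel`: since `g(t) = Re 1/(t + il)`, it is
the real part of the Mittag-Leffler series of `½ cot((t + il)/2)`, and the `q`-expansion of the
cotangent gives `∑_{n ≥ 1} e^{-nl} sin(nt)`. This series converges absolutely and uniformly in `t`,
so integrating it termwise against `f` produces `π ∑_{n ≥ 1} bₙ e^{-nl}`.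

This proves convergence along the sequence `A = 2πN`; for a real upper limit `A` the remaining piece
is at most `sup g` on the last period times `∫₀ᶜ |f|`, which tends to zero.
-/

/-- The conjugate Poisson kernel `t / (l² + t²)` of the half-plane, without its factor `1/π`. -/
noncomputable def conjKernel (l t : ℝ) : ℝ := t / (l ^ 2 + t ^ 2)

lemma conjKernel_neg (l t : ℝ) : conjKernel l (-t) = -conjKernel l t := by
  simp [conjKernel, neg_div]

lemma continuous_conjKernel {l : ℝ} (hl : 0 < l) : Continuous (conjKernel l) := by
  unfold conjKernel
  exact continuous_id.div (by fun_prop) fun t => by positivity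

lemma conjKernel_eq_re (l t : ℝ) : conjKernel l t = (1 / ((t : ℂ) + l * Complex.I)).re := by
  simp [conjKernel, Complex.inv_re, Complex.normSq_apply]
  ring

/-- For `|a - b|` bounded, the difference decays quadratically in `m`, although the kernel itself
decays only like `1/m`; this makes the sum over periods absolutely convergent. -/
lemma abs_conjKernel_sub_le {l : ℝ} (hl : 0 < l) {a b m : ℝ} (hm : 0 ≤ m) (ha : m ≤ a)
    (hb : m ≤ b) : |conjKernel l a - conjKernel l b| ≤ |a - b| / (l ^ 2 + m ^ 2) := by
  have hX : l ^ 2 + m ^ 2 ≤ l ^ 2 + a ^ 2 := by gcongr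
  have hY : l ^ 2 + m ^ 2 ≤ l ^ 2 + b ^ 2 := by gcongr
  have hD : 0 < l ^ 2 + m ^ 2 := by positivity
  have hX0 : 0 < l ^ 2 + a ^ 2 := by positivity
  have hY0 : 0 < l ^ 2 + b ^ 2 := by positivity
  have e : conjKernel l a - conjKernel l b
      = (a - b) * (l ^ 2 - a * b) / ((l ^ 2 + a ^ 2) * (l ^ 2 + b ^ 2)) := by
    unfold conjKernel
    field_simp
    ring
  -- the Cauchy-Schwarz inequality for `(l, a)` and `(l, -b)`
  have h1 : (l ^ 2 - a * b) ^ 2 ≤ (l ^ 2 + a ^ 2) * (l ^ 2 + b ^ 2) := by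
    nlinarith [sq_nonneg (l * (a + b))]
  have h2 : (l ^ 2 + m ^ 2) ^ 2 ≤ (l ^ 2 + a ^ 2) * (l ^ 2 + b ^ 2) := by
    rw [sq]; gcongr
  have h3 : |l ^ 2 - a * b| * (l ^ 2 + m ^ 2) ≤ (l ^ 2 + a ^ 2) * (l ^ 2 + b ^ 2) := by
    refine (pow_le_pow_iff_left₀ (by positivity) (by positivity) two_ne_zero).1 ?_
    rw [mul_pow, sq_abs]
    rw [sq ((l ^ 2 + a ^ 2) * (l ^ 2 + b ^ 2))]
    gcongr
  rw [e, abs_div, abs_mul, abs_of_pos (mul_pos hX0 hY0), div_le_div_iff₀ (by positivity) hD,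
    mul_assoc]
  gcongr

lemma summable_bound {l c : ℝ} (hl : 0 < l) (hc : 0 < c) :
    Summable fun k : ℕ => c / (l ^ 2 + (c * k) ^ 2) := by
  rw [← summable_nat_add_iff 1]
  have h : Summable fun k : ℕ => (1 / c) * (1 / ((k + 1 : ℕ) : ℝ) ^ 2) :=
    ((summable_nat_add_iff 1).2 (Real.summable_one_div_nat_pow.2 one_lt_two)).mul_left _
  refine Summable.of_nonneg_of_le (fun k => by positivity) (fun k => ?_) h
  have hk : (0 : ℝ) < ((k + 1 : ℕ) : ℝ) := by positivity
  rw [div_mul_div_comm, one_mul, div_le_div_iff₀ (by positivity) (by positivity)]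
  nlinarith [sq_nonneg l]

/-- The Mittag-Leffler series of the cotangent, summed over `-N ≤ k < N`. -/
lemma tendsto_sum_cot {z : ℂ} (hz : 0 < z.im) :
    Tendsto (fun N : ℕ => ∑ k ∈ Finset.range N, (1 / (z + k) + 1 / (z - (k + 1)))) atTop
      (𝓝 (Real.pi * Complex.cot (Real.pi * z))) := by
  have hz' : z ∈ Complex.integerComplement := by
    rintro ⟨n, rfl⟩
    simp at hz
  have h1 := tendsto_logDeriv_euler_cot_sub hz'
  have h2 : Tendsto (fun N : ℕ => 1 / (z + N)) atTop (𝓝 0) := by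
    simp only [one_div]
    refine tendsto_inv₀_cobounded.comp ?_
    exact (tendsto_const_add_cobounded z).comp tendsto_natCast_atTop_cobounded
  have h3 := (h1.const_add (1 / z)).sub h2
  have e : 1 / z + (Real.pi * Complex.cot (Real.pi * z) - 1 / z) - 0
      = Real.pi * Complex.cot (Real.pi * z) := by ring
  rw [e] at h3
  refine h3.congr fun N => ?_
  -- the half-open range of indices leaves the unpaired term `1 / (z + N)`, which tends to zero
  induction N with
  | zero => simp
  | succ n ih =>
    rw [Finset.sum_range_succ, Finset.sum_range_succ, ← ih]
    simp only [cotTerm]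
    push_cast
    ring

lemma im_coord_pos {l : ℝ} (hl : 0 < l) (t : ℝ) :
    0 < (((t : ℂ) + l * Complex.I) / (2 * Real.pi)).im := by
  have hpi := Real.pi_pos
  have : ((t : ℂ) + l * Complex.I) / (2 * Real.pi)
      = ((t / (2 * Real.pi) : ℝ) : ℂ) + ((l / (2 * Real.pi) : ℝ) : ℂ) * Complex.I := by
    push_cast; ring
  rw [this, Complex.add_im, Complex.ofReal_im, Complex.im_ofReal_mul, Complex.I_im, zero_add,
    mul_one]
  positivity

/-- The `q`-expansion of the cotangent in the coordinate `z = (t + i l) / 2π`, real part. -/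
lemma re_cot_eq {l : ℝ} (hl : 0 < l) (t : ℝ) :
    (Real.pi * Complex.cot (Real.pi * (((t : ℂ) + l * Complex.I) / (2 * Real.pi)))).re
      = 2 * Real.pi * ∑' n : ℕ, Real.exp (-(n + 1) * l) * Real.sin ((n + 1) * t) := by
  have hpi := Real.pi_pos
  have him := im_coord_pos hl t
  have h := pi_mul_cot_pi_q_exp ⟨_, him⟩
  simp only at h
  rw [h]
  have hq : 2 * (Real.pi : ℂ) * Complex.I * (((t : ℂ) + l * Complex.I) / (2 * Real.pi))
      = -l + t * Complex.I := by
    have : (Real.pi : ℂ) ≠ 0 := by exact_mod_cast hpi.ne'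
    field_simp
    ring_nf
    simp
    ring
  rw [hq]
  have hs : Summable fun n : ℕ => Complex.exp (-l + t * Complex.I) ^ n := by
    apply summable_geometric_of_norm_lt_one
    rw [Complex.norm_exp]
    simpa using hl
  have him' := Complex.hasSum_im hs.hasSum
  have e : ∀ n : ℕ, (Complex.exp (-l + t * Complex.I) ^ n).im
      = Real.exp (-n * l) * Real.sin (n * t) := by
    intro n
    rw [← Complex.exp_nat_mul, Complex.exp_im]
    simp
  simp only [e] at him'
  -- the term `n = 0` of the geometric series is real, so only `n ≥ 1` contributes
  have h0 := him'.summable.tsum_eq_zero_add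
  rw [him'.tsum_eq] at h0
  simp only [Nat.cast_zero, zero_mul, Real.sin_zero, mul_zero, zero_add, Nat.cast_add,
    Nat.cast_one] at h0
  rw [← h0]
  simp [Complex.mul_re]

/-- Periodisation of the kernel: the sum of `conjKernel l (t + 2πk)` over `-N ≤ k < N` converges to
the conjugate Poisson series of the circle. -/
lemma tendsto_sum_conjKernel {l : ℝ} (hl : 0 < l) (t : ℝ) :
    Tendsto (fun N : ℕ => ∑ k ∈ Finset.range N,
      (conjKernel l (t + 2 * Real.pi * k) + conjKernel l (t - 2 * Real.pi * (k + 1)))) atTop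
      (𝓝 (∑' n : ℕ, Real.exp (-(n + 1) * l) * Real.sin ((n + 1) * t))) := by
  have hpi := Real.pi_pos
  have hpi' : (Real.pi : ℂ) ≠ 0 := by exact_mod_cast hpi.ne'
  have him := im_coord_pos hl t
  have h := ((Complex.continuous_re.tendsto _).comp (tendsto_sum_cot him)).const_mul
    (1 / (2 * Real.pi))
  rw [re_cot_eq hl] at h
  have e : 1 / (2 * Real.pi) * (2 * Real.pi * ∑' n : ℕ, Real.exp (-(n + 1) * l)
      * Real.sin ((n + 1) * t)) = ∑' n : ℕ, Real.exp (-(n + 1) * l) * Real.sin ((n + 1) * t) := by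
    rw [← mul_assoc, one_div_mul_cancel (by positivity), one_mul]
  rw [e] at h
  refine h.congr fun N => ?_
  have key : ∀ s : ℝ, conjKernel l (t + 2 * Real.pi * s)
      = 1 / (2 * Real.pi) * (1 / (((t : ℂ) + l * Complex.I) / (2 * Real.pi) + s)).re := by
    intro s
    have h1 : ((t : ℂ) + l * Complex.I) / (2 * Real.pi) + s
        = (((t + 2 * Real.pi * s : ℝ) : ℂ) + l * Complex.I) / ((2 * Real.pi : ℝ) : ℂ) := by
      push_cast
      field_simp
      ring
    rw [h1, conjKernel_eq_re, one_div_div, div_eq_mul_one_div ((2 * Real.pi : ℝ) : ℂ), Complex.re_ofReal_mul]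
    field_simp
  simp only [Function.comp, Complex.re_sum, Finset.mul_sum, Complex.add_re, mul_add]
  refine Finset.sum_congr rfl fun k _ => ?_
  have k1 := key k
  have k2 := key (-(k + 1))
  have e2 : t - (2 * Real.pi * k + 2 * Real.pi * 1) = t + 2 * Real.pi * (-(k + 1)) := by ring
  rw [k1, e2, k2]
  push_cast
  congr 4

/-- Symmetrisation of the integral over one period by the reflection `t ↦ 2π - t`, under which `f`
is odd. -/
lemma integral_period_eq {f : ℝ → ℝ} (hodd : ∀ t : ℝ, f (-t) = -f t)
    (hper : ∀ t : ℝ, f (t + 2 * Real.pi) = f t)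
    (hint : IntervalIntegrable f volume 0 (2 * Real.pi)) {l : ℝ} (hl : 0 < l) (k : ℕ) :
    ∫ t in (2 * Real.pi * k)..(2 * Real.pi * (k + 1 : ℕ)), f t * conjKernel l t
      = 1 / 2 * ∫ t in (0 : ℝ)..(2 * Real.pi), f t *
        (conjKernel l (t + 2 * Real.pi * k) + conjKernel l (t - 2 * Real.pi * (k + 1))) := by
  have hP : Function.Periodic f (2 * Real.pi) := hper
  have hc := continuous_conjKernel hl
  have h1 : ∫ t in (2 * Real.pi * k)..(2 * Real.pi * (k + 1 : ℕ)), f t * conjKernel l t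
      = ∫ t in (0 : ℝ)..(2 * Real.pi), f t * conjKernel l (t + 2 * Real.pi * k) := by
    have := intervalIntegral.integral_comp_add_right (a := 0) (b := 2 * Real.pi)
      (fun t => f t * conjKernel l t) (2 * Real.pi * k)
    have e : 2 * Real.pi * ((k + 1 : ℕ) : ℝ) = 2 * Real.pi + 2 * Real.pi * k := by
      push_cast; ring
    rw [e, ← zero_add (2 * Real.pi * (k : ℝ)), add_comm (2 * Real.pi) _, zero_add]
    rw [zero_add, add_comm (2 * Real.pi) _] at this
    rw [← this]
    refine intervalIntegral.integral_congr fun t _ => ?_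
    have := hP.nat_mul k t
    rw [mul_comm] at this
    simp only [this]
  have h2 : ∫ t in (0 : ℝ)..(2 * Real.pi), f t * conjKernel l (t + 2 * Real.pi * k)
      = ∫ t in (0 : ℝ)..(2 * Real.pi), f t * conjKernel l (t - 2 * Real.pi * (k + 1)) := by
    have := intervalIntegral.integral_comp_sub_left (a := 0) (b := 2 * Real.pi)
      (fun t => f t * conjKernel l (t + 2 * Real.pi * k)) (2 * Real.pi)
    rw [sub_self, sub_zero] at this
    rw [← this]
    refine intervalIntegral.integral_congr fun t _ => ?_
    have e1 : f (2 * Real.pi - t) = -f t := by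
      rw [← hodd, ← hper (-t)]; congr 1; ring
    have e2 : 2 * Real.pi - t + 2 * Real.pi * k = -(t - 2 * Real.pi * (k + 1)) := by ring
    simp only [e1, e2, conjKernel_neg, neg_mul_neg]
  have i1 : IntervalIntegrable (fun t => f t * conjKernel l (t + 2 * Real.pi * k)) volume 0
      (2 * Real.pi) := hint.mul_continuousOn (by fun_prop)
  have i2 : IntervalIntegrable (fun t => f t * conjKernel l (t - 2 * Real.pi * (k + 1))) volume 0
      (2 * Real.pi) := hint.mul_continuousOn (by fun_prop)
  simp only [mul_add (f _)]
  rw [intervalIntegral.integral_add i1 i2, ← h2, h1]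
  ring

/-- Convergence along whole periods, with the limit in integral form. -/
lemma tendsto_integral_nat {f : ℝ → ℝ} (hodd : ∀ t : ℝ, f (-t) = -f t)
    (hper : ∀ t : ℝ, f (t + 2 * Real.pi) = f t)
    (hint : IntervalIntegrable f volume 0 (2 * Real.pi)) {l : ℝ} (hl : 0 < l) :
    Tendsto (fun N : ℕ => ∫ t in (0 : ℝ)..(2 * Real.pi * N), f t * conjKernel l t) atTop
      (𝓝 (1 / 2 * ∫ t in (0 : ℝ)..(2 * Real.pi),
        f t * ∑' n : ℕ, Real.exp (-(n + 1) * l) * Real.sin ((n + 1) * t))) := by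
  have hP : Function.Periodic f (2 * Real.pi) := hper
  have hpi := Real.two_pi_pos
  have hc := continuous_conjKernel hl
  have hI : ∀ a b, IntervalIntegrable f volume a b := hP.intervalIntegrable₀ hpi.ne' hint
  have hS := summable_bound hl hpi
  have hbd : ∀ (k : ℕ) (t : ℝ), t ∈ Set.uIoc 0 (2 * Real.pi) →
      |conjKernel l (t + 2 * Real.pi * k) + conjKernel l (t - 2 * Real.pi * (k + 1))|
        ≤ 2 * Real.pi / (l ^ 2 + (2 * Real.pi * k) ^ 2) := by
    intro k t ht
    rw [Set.uIoc_of_le hpi.le] at ht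
    have e : conjKernel l (t - 2 * Real.pi * (k + 1))
        = -conjKernel l (2 * Real.pi * (k + 1) - t) := by rw [← conjKernel_neg, neg_sub]
    rw [e, ← sub_eq_add_neg]
    refine (abs_conjKernel_sub_le hl (m := 2 * Real.pi * k) (by positivity) (by linarith [ht.1])
      (by linarith [ht.2])).trans ?_
    gcongr
    rw [abs_le]
    constructor <;> linarith [ht.1, ht.2]
  have hsum : HasSum (fun k : ℕ => ∫ t in (0 : ℝ)..(2 * Real.pi), f t *
      (conjKernel l (t + 2 * Real.pi * k) + conjKernel l (t - 2 * Real.pi * (k + 1))))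
      (∫ t in (0 : ℝ)..(2 * Real.pi),
        f t * ∑' n : ℕ, Real.exp (-(n + 1) * l) * Real.sin ((n + 1) * t)) := by
    refine intervalIntegral.hasSum_integral_of_dominated_convergence
      (fun k t => |f t| * (2 * Real.pi / (l ^ 2 + (2 * Real.pi * k) ^ 2))) (fun k => ?_)
      (fun k => ?_) ?_ ?_ ?_
    · exact (hint.mul_continuousOn (g := fun t => conjKernel l (t + 2 * Real.pi * k)
        + conjKernel l (t - 2 * Real.pi * (k + 1))) (by fun_prop)).def'.aestronglyMeasurable
    · refine ae_of_all _ fun t ht => ?_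
      rw [Real.norm_eq_abs, abs_mul]
      gcongr
      exact hbd k t ht
    · exact ae_of_all _ fun t _ => hS.mul_left _
    · simp only [tsum_mul_left]
      exact hint.abs.mul_const _
    · refine ae_of_all _ fun t ht => ?_
      have hs : Summable fun k : ℕ =>
          conjKernel l (t + 2 * Real.pi * k) + conjKernel l (t - 2 * Real.pi * (k + 1)) :=
        Summable.of_norm_bounded hS fun k => hbd k t ht
      exact ((hs.hasSum_iff_tendsto_nat).2 (tendsto_sum_conjKernel hl t)).mul_left _
  refine (hsum.tendsto_sum_nat.const_mul (1 / 2)).congr fun N => ?_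
  rw [Finset.mul_sum]
  simp only [← integral_period_eq hodd hper hint hl]
  have := intervalIntegral.sum_integral_adjacent_intervals (μ := volume)
    (f := fun t => f t * conjKernel l t) (a := fun k : ℕ => 2 * Real.pi * (k : ℝ)) (n := N)
    (fun k _ => (hI _ _).mul_continuousOn hc.continuousOn)
  simpa using this

/-- Termwise integration of the conjugate Poisson series against `f`. -/
lemma integral_mul_tsum_sin {f : ℝ → ℝ} (hint : IntervalIntegrable f volume 0 (2 * Real.pi))
    (b : ℕ → ℝ) (hb : ∀ n : ℕ, 1 ≤ n →
      b n = (1 / Real.pi) * ∫ t in (0:ℝ)..(2 * Real.pi), f t * Real.sin (n * t))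
    {l : ℝ} (hl : 0 < l) :
    ∫ t in (0 : ℝ)..(2 * Real.pi),
        f t * ∑' n : ℕ, Real.exp (-(n + 1) * l) * Real.sin ((n + 1) * t)
      = Real.pi * ∑' n : ℕ, b (n + 1) * Real.exp (-(n + 1) * l) := by
  have hS : Summable fun n : ℕ => Real.exp (-((n : ℝ) + 1) * l) := by
    have := (summable_nat_add_iff 1).2 (Real.summable_exp_nat_mul_of_ge (neg_neg_of_pos hl)
      (f := fun n : ℕ => (n : ℝ)) fun n => le_rfl)
    refine this.congr fun n => ?_
    push_cast
    ring_nf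
  have hbd : ∀ (n : ℕ) (t : ℝ), ‖Real.exp (-((n : ℝ) + 1) * l) * Real.sin ((n + 1) * t)‖
      ≤ Real.exp (-((n : ℝ) + 1) * l) := by
    intro n t
    rw [norm_mul, Real.norm_eq_abs, Real.norm_eq_abs, Real.abs_exp]
    exact mul_le_of_le_one_right (Real.exp_pos _).le (Real.abs_sin_le_one _)
  have hsum : HasSum (fun n : ℕ => ∫ t in (0 : ℝ)..(2 * Real.pi),
      f t * (Real.exp (-(n + 1) * l) * Real.sin ((n + 1) * t)))
      (∫ t in (0 : ℝ)..(2 * Real.pi),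
        f t * ∑' n : ℕ, Real.exp (-(n + 1) * l) * Real.sin ((n + 1) * t)) := by
    refine intervalIntegral.hasSum_integral_of_dominated_convergence
      (fun n t => |f t| * Real.exp (-(n + 1) * l)) (fun n => ?_) (fun n => ?_) ?_ ?_ ?_
    · exact (hint.mul_continuousOn (g := fun t => Real.exp (-(n + 1) * l)
        * Real.sin ((n + 1) * t)) (by fun_prop)).def'.aestronglyMeasurable
    · refine ae_of_all _ fun t _ => ?_
      rw [norm_mul, Real.norm_eq_abs (f t)]
      gcongr
      exact hbd n t
    · exact ae_of_all _ fun t _ => hS.mul_left _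
    · simp only [tsum_mul_left]
      exact hint.abs.mul_const _
    · exact ae_of_all _ fun t _ => (Summable.of_norm_bounded hS (hbd · t)).hasSum.mul_left _
  rw [← hsum.tsum_eq, ← tsum_mul_left]
  refine tsum_congr fun n => ?_
  rw [hb (n + 1) (by omega)]
  push_cast
  have e : ∀ t, f t * (Real.exp (-((n : ℝ) + 1) * l) * Real.sin ((n + 1) * t))
      = Real.exp (-((n : ℝ) + 1) * l) * (f t * Real.sin ((n + 1) * t)) := fun t => by ring
  simp only [e]
  rw [intervalIntegral.integral_const_mul]
  have := Real.pi_pos.ne'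
  field_simp

/-- The integral over an incomplete last period tends to zero, since the kernel does. -/
lemma tendsto_integral_remainder {f : ℝ → ℝ} (hper : ∀ t : ℝ, f (t + 2 * Real.pi) = f t)
    (hint : IntervalIntegrable f volume 0 (2 * Real.pi)) {l : ℝ} (hl : 0 < l) :
    Tendsto (fun A : ℝ => ∫ t in (2 * Real.pi * ⌊A / (2 * Real.pi)⌋₊)..A, f t * conjKernel l t)
      atTop (𝓝 0) := by
  have hP : Function.Periodic f (2 * Real.pi) := hper
  have hpi := Real.two_pi_pos
  have hc := continuous_conjKernel hl
  have hI : ∀ a b, IntervalIntegrable f volume a b := hP.intervalIntegrable₀ hpi.ne' hint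
  have hN : Tendsto (fun A : ℝ => ⌊A / (2 * Real.pi)⌋₊) atTop atTop :=
    tendsto_nat_floor_atTop.comp (tendsto_id.atTop_div_const hpi)
  have hx : Tendsto (fun A : ℝ => 2 * Real.pi * (⌊A / (2 * Real.pi)⌋₊ : ℝ)) atTop atTop :=
    (tendsto_natCast_atTop_atTop.comp hN).const_mul_atTop hpi
  have hlim := hx.inv_tendsto_atTop.mul_const (∫ t in (0 : ℝ)..(2 * Real.pi), |f t|)
  rw [zero_mul] at hlim
  refine squeeze_zero_norm' ?_ hlim
  filter_upwards [hx.eventually_gt_atTop 0, eventually_ge_atTop 0] with A hA hA0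
  simp only [Pi.inv_apply]
  set a : ℝ := 2 * Real.pi * (⌊A / (2 * Real.pi)⌋₊ : ℝ) with ha
  have h1 : a ≤ A := by
    have := Nat.floor_le (div_nonneg hA0 hpi.le)
    rw [le_div_iff₀ hpi] at this
    rw [ha]; linarith
  have h2 : A ≤ a + 2 * Real.pi := by
    have := (Nat.lt_floor_add_one (A / (2 * Real.pi))).le
    rw [div_le_iff₀ hpi] at this
    rw [ha]; linarith
  have habs : Function.Periodic (fun t => |f t|) (2 * Real.pi) := fun t => by simp only [hper]
  calc ‖∫ t in a..A, f t * conjKernel l t‖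
      ≤ ∫ t in a..A, a⁻¹ * |f t| := by
        refine intervalIntegral.norm_integral_le_of_norm_le h1 (ae_of_all _ fun t ht => ?_)
          ((hI _ _).abs.const_mul _)
        have ht0 : 0 < t := hA.trans ht.1
        rw [norm_mul, Real.norm_eq_abs, Real.norm_eq_abs, mul_comm]
        gcongr
        rw [conjKernel, abs_of_nonneg (by positivity)]
        calc t / (l ^ 2 + t ^ 2) ≤ t / t ^ 2 := by gcongr; nlinarith [sq_nonneg l]
          _ = t⁻¹ := by field_simp
          _ ≤ a⁻¹ := by gcongr; exact ht.1.le
    _ = a⁻¹ * ∫ t in a..A, |f t| := intervalIntegral.integral_const_mul _ _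
    _ ≤ a⁻¹ * ∫ t in a..(a + 2 * Real.pi), |f t| := by
        gcongr
        exact intervalIntegral.integral_mono_interval le_rfl h1 h2
          (ae_of_all _ fun t => abs_nonneg _) (hI _ _).abs
    _ = a⁻¹ * ∫ t in (0 : ℝ)..(2 * Real.pi), |f t| := by
        rw [habs.intervalIntegral_add_eq a 0, zero_add]

theorem stmt11 (f : ℝ → ℝ) (hodd : ∀ t : ℝ, f (-t) = -f t)
    (hper : ∀ t : ℝ, f (t + 2 * Real.pi) = f t)
    (hint : IntervalIntegrable f volume 0 (2 * Real.pi))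
    (b : ℕ → ℝ)
    (hb : ∀ n : ℕ, 1 ≤ n →
      b n = (1 / Real.pi) * ∫ t in (0:ℝ)..(2 * Real.pi), f t * Real.sin (n * t))
    (l : ℝ) (hl : 0 < l) :
    Tendsto (fun A : ℝ => ∫ t in (0:ℝ)..A, t * f t / (l ^ 2 + t ^ 2)) atTop
      (𝓝 (Real.pi / 2 * ∑' n : ℕ, b (n + 1) * Real.exp (-(n + 1) * l))) := by
  have hP : Function.Periodic f (2 * Real.pi) := hper
  have hpi := Real.two_pi_pos
  have hc := continuous_conjKernel hl
  have hI : ∀ a b, IntervalIntegrable (fun t => f t * conjKernel l t) volume a b := fun a b =>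
    (hP.intervalIntegrable₀ hpi.ne' hint a b).mul_continuousOn hc.continuousOn
  have hN : Tendsto (fun A : ℝ => ⌊A / (2 * Real.pi)⌋₊) atTop atTop :=
    tendsto_nat_floor_atTop.comp (tendsto_id.atTop_div_const hpi)
  have h := ((tendsto_integral_nat hodd hper hint hl).comp hN).add
    (tendsto_integral_remainder hper hint hl)
  rw [integral_mul_tsum_sin hint b hb hl, add_zero, ← mul_assoc, one_div_mul_eq_div] at h
  refine h.congr fun A => ?_
  simp only [Function.comp]
  rw [intervalIntegral.integral_add_adjacent_intervals (hI _ _) (hI _ _)]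
  refine intervalIntegral.integral_congr fun t _ => ?_
  simp only [conjKernel]
  ring
end

section
/- Let G : Ω → ℂ be an analytic function on an open set Ω ⊆ ℂ containing the closed unit disk {z : |z| ≤ 1}, and define g_c : ℝ → ℂ by g_c(θ) = (G(e^{iθ}) + G(e^{−iθ}))/2. Then for every λ > 0, ∫₀^∞ g_c(x)/(λ² + x²) dx = (π/(2λ))·G(e^{−λ}). -/
open MeasureTheory Filter Topology

/-!
The function `F z = G (exp (I * z))` is holomorphic near the closed upper half-plane and bounded on
it, since `exp (I * z)` lies in the closed unit disk there. The even part of `F` on the real line is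
the integrand's numerator, so the integral is half of `∫ F x / (x ^ 2 + l ^ 2)` over the real line.

Subtracting the value at the pole `I * l` removes the singularity:
`K z = (F z - F (I * l)) / (z ^ 2 + l ^ 2)` extends holomorphically to the closed upper half-plane
and is `O(1 / |z| ^ 2)` there. Cauchy's theorem on the rectangles `[-R, R] × [0, R]` gives
`∫ K = 0` over the real line, so that `∫ F x / (x ^ 2 + l ^ 2) = F (I * l) * ∫ 1 / (x ^ 2 + l ^ 2)`,
where `F (I * l) = G (exp (-l))` and the last integral is `π / l`.
-/

/-- A function that is holomorphic on a neighbourhood of the closed upper half-plane and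
`O(1 / |z| ^ 2)` at infinity in it has zero integral over the real line. -/
lemma integral_real_eq_zero_of_decay (K : ℂ → ℂ) (U : Set ℂ) (hU : ∀ z : ℂ, 0 ≤ z.im → z ∈ U)
    (hK : DifferentiableOn ℂ K U) (C R₀ : ℝ)
    (hbound : ∀ z : ℂ, 0 ≤ z.im → ∀ R : ℝ, R₀ ≤ R → R ≤ ‖z‖ → ‖K z‖ ≤ C / R ^ 2)
    (hint : Integrable fun x : ℝ => K x) : ∫ x : ℝ, K x = 0 := by
  have hlim : Tendsto (fun R : ℝ => ∫ x in (-R)..R, K x) atTop (𝓝 (∫ x : ℝ, K x)) :=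
    intervalIntegral_tendsto_integral hint tendsto_neg_atTop_atBot tendsto_id
  have hzero : Tendsto (fun R : ℝ => ∫ x in (-R)..R, K x) atTop (𝓝 0) := by
    have hb : Tendsto (fun R : ℝ => 4 * C / R) atTop (𝓝 0) :=
      tendsto_const_nhds.div_atTop tendsto_id
    refine squeeze_zero_norm' ?_ hb
    filter_upwards [eventually_ge_atTop R₀, eventually_gt_atTop 0] with R hR hRpos
    have hrect := Complex.integral_boundary_rect_eq_zero_of_differentiableOn K (-R : ℂ)
      (R + R * Complex.I) (hK.mono (by
        intro z hz
        apply hU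
        have := hz.2
        simp [Set.uIcc_of_le hRpos.le] at this
        exact this.1))
    simp only [Complex.neg_re, Complex.ofReal_re, Complex.neg_im, Complex.ofReal_im, neg_zero,
      Complex.add_re, Complex.mul_re, Complex.I_re, mul_zero, Complex.I_im, mul_one,
      add_zero, Complex.add_im, Complex.mul_im, zero_add, Complex.ofReal_zero, zero_mul,
      Complex.ofReal_neg, smul_eq_mul, sub_self] at hrect
    have htop : ‖∫ x in (-R)..R, K (x + R * Complex.I)‖ ≤ C / R ^ 2 * |R - (-R)| := by
      apply intervalIntegral.norm_integral_le_of_norm_le_const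
      intro x _
      refine hbound _ (by simpa using hRpos.le) R hR ?_
      refine le_trans ?_ (Complex.abs_im_le_norm _)
      simp [le_abs_self]
    have hright : ‖∫ y in (0:ℝ)..R, K (R + y * Complex.I)‖ ≤ C / R ^ 2 * |R - 0| := by
      apply intervalIntegral.norm_integral_le_of_norm_le_const
      intro y hy
      rw [Set.uIoc_of_le hRpos.le] at hy
      refine hbound _ (by simpa using hy.1.le) R hR ?_
      refine le_trans ?_ (Complex.abs_re_le_norm _)
      simp [le_abs_self]
    have hleft : ‖∫ y in (0:ℝ)..R, K (-R + y * Complex.I)‖ ≤ C / R ^ 2 * |R - 0| := by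
      apply intervalIntegral.norm_integral_le_of_norm_le_const
      intro y hy
      rw [Set.uIoc_of_le hRpos.le] at hy
      refine hbound _ (by simpa using hy.1.le) R hR ?_
      refine le_trans ?_ (Complex.abs_re_le_norm _)
      simp [le_abs_self]
    have e : ∫ x in (-R)..R, K x = (∫ x in (-R)..R, K (x + R * Complex.I))
        - Complex.I * (∫ y in (0:ℝ)..R, K (R + y * Complex.I))
        + Complex.I * (∫ y in (0:ℝ)..R, K (-R + y * Complex.I)) := by
      linear_combination hrect
    rw [e]
    calc _ ≤ ‖∫ x in (-R)..R, K (x + R * Complex.I)‖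
          + ‖Complex.I * (∫ y in (0:ℝ)..R, K (R + y * Complex.I))‖
          + ‖Complex.I * (∫ y in (0:ℝ)..R, K (-R + y * Complex.I))‖ :=
        (norm_add_le _ _).trans (by gcongr; exact norm_sub_le _ _)
      _ ≤ C / R ^ 2 * |R - (-R)| + C / R ^ 2 * |R - 0| + C / R ^ 2 * |R - 0| := by
        simp only [norm_mul, Complex.norm_I, one_mul]
        gcongr
      _ = 4 * C / R := by
        rw [abs_of_pos (by linarith), abs_of_pos (by linarith)]
        field_simp
        ring
  exact tendsto_nhds_unique hlim hzero

lemma inv_sq_add_sq_eq (l : ℝ) (hl : 0 < l) (x : ℝ) :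
    (l ^ 2 + x ^ 2)⁻¹ = (l ^ 2)⁻¹ * (1 + (l⁻¹ * x) ^ 2)⁻¹ := by
  rw [← mul_inv]
  congr 1
  field_simp

lemma integrable_inv_sq_add_sq (l : ℝ) (hl : 0 < l) :
    Integrable fun x : ℝ => (l ^ 2 + x ^ 2)⁻¹ := by
  simp_rw [inv_sq_add_sq_eq l hl]
  exact (integrable_inv_one_add_sq.comp_mul_left' (inv_ne_zero hl.ne')).const_mul _

lemma integral_real_inv_sq_add_sq (l : ℝ) (hl : 0 < l) :
    ∫ x : ℝ, (l ^ 2 + x ^ 2)⁻¹ = Real.pi / l := by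
  simp_rw [inv_sq_add_sq_eq l hl]
  rw [integral_const_mul, Measure.integral_comp_mul_left (fun x : ℝ => (1 + x ^ 2)⁻¹),
    integral_univ_inv_one_add_sq, inv_inv, abs_of_pos hl, smul_eq_mul]
  field_simp

/-- The Poisson integral at the point `I * l` of a bounded function holomorphic near the closed
upper half-plane. -/
lemma integral_real_div_sq_add_sq (F : ℂ → ℂ) (U : Set ℂ) (hUo : IsOpen U)
    (hU : ∀ z : ℂ, 0 ≤ z.im → z ∈ U) (hF : DifferentiableOn ℂ F U) (M : ℝ)
    (hM : ∀ z : ℂ, 0 ≤ z.im → ‖F z‖ ≤ M) (l : ℝ) (hl : 0 < l) :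
    Integrable (fun x : ℝ => F x / ((l ^ 2 + x ^ 2 : ℝ) : ℂ)) ∧
    ∫ x : ℝ, F x / ((l ^ 2 + x ^ 2 : ℝ) : ℂ) = (Real.pi / l : ℝ) * F (Complex.I * l) := by
  set p : ℂ := Complex.I * l with hp
  have hpim : p.im = l := by simp [hp]
  have hpp : p * p = -(l : ℂ) ^ 2 := by
    rw [hp]; linear_combination (l : ℂ) ^ 2 * Complex.I_mul_I
  have hpU : p ∈ U := hU p (by rw [hpim]; exact hl.le)
  have hM0 : 0 ≤ M := (norm_nonneg _).trans (hM p (by rw [hpim]; exact hl.le))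
  let K : ℂ → ℂ := fun z => dslope F p z / (z + p)
  have hKne : ∀ z : ℂ, z ≠ p → K z = (F z - F p) / (z ^ 2 + l ^ 2) := by
    intro z hz
    simp only [K]
    rw [dslope_of_ne _ hz, slope_def_field, div_div]
    congr 1
    linear_combination -hpp
  have hreal : ∀ x : ℝ, (x : ℂ) ≠ p := by
    intro x h
    have := congrArg Complex.im h
    rw [hpim, Complex.ofReal_im] at this
    linarith
  have hFcont : Continuous fun x : ℝ => F x :=
    hF.continuousOn.comp_continuous Complex.continuous_ofReal (fun x => hU _ (by simp))
  have hinvint : Integrable fun x : ℝ => (((l ^ 2 + x ^ 2)⁻¹ : ℝ) : ℂ) :=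
    (integrable_inv_sq_add_sq l hl).ofReal
  have hFint : Integrable fun x : ℝ => F x / ((l ^ 2 + x ^ 2 : ℝ) : ℂ) := by
    have := hinvint.bdd_mul hFcont.aestronglyMeasurable
      (Eventually.of_forall fun x => hM (x : ℂ) (by simp))
    refine this.congr (Eventually.of_forall fun x => ?_)
    simp [div_eq_mul_inv]
  have hKreal : ∀ x : ℝ, K x = F x / ((l ^ 2 + x ^ 2 : ℝ) : ℂ)
      - F p * (((l ^ 2 + x ^ 2)⁻¹ : ℝ) : ℂ) := by
    intro x
    rw [hKne _ (hreal x)]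
    push_cast
    rw [add_comm]
    ring
  have hKint : Integrable fun x : ℝ => K x := by
    simp_rw [hKreal]
    exact hFint.sub (hinvint.const_mul _)
  have hK0 : ∫ x : ℝ, K x = 0 := by
    refine integral_real_eq_zero_of_decay K (U ∩ {z | z + p ≠ 0}) ?_ ?_ (4 * M) (2 * l) ?_ hKint
    · refine fun z hz => ⟨hU z hz, fun h => ?_⟩
      have := congrArg Complex.im h
      rw [Complex.add_im, hpim, Complex.zero_im] at this
      linarith
    · refine DifferentiableOn.div ?_ (by fun_prop) (fun z hz => hz.2)
      exact ((Complex.differentiableOn_dslope (hUo.mem_nhds hpU)).2 hF).mono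
        Set.inter_subset_left
    · intro z hz R hR hzR
      have hnp : ‖p‖ = l := by simp [hp, abs_of_pos hl]
      have hne : z ≠ p := by
        rintro rfl
        linarith
      rw [hKne z hne, norm_div]
      have hden : R ^ 2 / 2 ≤ ‖z ^ 2 + (l : ℂ) ^ 2‖ := by
        have h1 : ‖z ^ 2‖ - ‖(l : ℂ) ^ 2‖ ≤ ‖z ^ 2 + (l : ℂ) ^ 2‖ := by
          have := norm_sub_norm_le (z ^ 2) (-(l : ℂ) ^ 2)
          simpa using this
        simp only [norm_pow, Complex.norm_real, Real.norm_eq_abs, sq_abs] at h1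
        nlinarith
      have hnum : ‖F z - F p‖ ≤ 2 * M := by
        have := norm_sub_le (F z) (F p)
        have := hM z hz
        have := hM p (by rw [hpim]; exact hl.le)
        linarith
      have hRpos : 0 < R := by linarith
      calc _ ≤ 2 * M / (R ^ 2 / 2) := by gcongr
        _ = 4 * M / R ^ 2 := by field_simp; ring
  refine ⟨hFint, ?_⟩
  simp_rw [hKreal] at hK0
  rw [integral_sub hFint (hinvint.const_mul _), integral_const_mul, integral_complex_ofReal,
    integral_real_inv_sq_add_sq l hl] at hK0
  linear_combination hK0

theorem stmt12 (Ω : Set ℂ) (hΩ : IsOpen Ω) (hball : Metric.closedBall (0 : ℂ) 1 ⊆ Ω)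
    (G : ℂ → ℂ) (hG : DifferentiableOn ℂ G Ω)
    (l : ℝ) (hl : 0 < l) :
    (∫ x in Set.Ici (0:ℝ),
        ((G (Complex.exp (Complex.I * x)) + G (Complex.exp (-Complex.I * x))) / 2)
          / ((l ^ 2 + x ^ 2 : ℝ) : ℂ))
      = (Real.pi / (2 * l) : ℝ) * G (Real.exp (-l)) := by
  have hexp : Differentiable ℂ fun z : ℂ => Complex.exp (Complex.I * z) := by fun_prop
  have hdisk : ∀ z : ℂ, 0 ≤ z.im →
      Complex.exp (Complex.I * z) ∈ Metric.closedBall (0 : ℂ) 1 := by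
    intro z hz
    simp [Complex.norm_exp, hz]
  obtain ⟨M, hM⟩ := (isCompact_closedBall (0 : ℂ) 1).exists_bound_of_continuousOn
    (hG.continuousOn.mono hball)
  obtain ⟨hint, hval⟩ := integral_real_div_sq_add_sq (fun z => G (Complex.exp (Complex.I * z)))
    ((fun z : ℂ => Complex.exp (Complex.I * z)) ⁻¹' Ω) (hΩ.preimage hexp.continuous)
    (fun z hz => hball (hdisk z hz))
    (hG.comp hexp.differentiableOn (fun _ hz => hz)) M (fun z hz => hM _ (hdisk z hz)) l hl
  have hpt : Complex.exp (Complex.I * (Complex.I * l)) = (Real.exp (-l) : ℝ) := by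
    rw [← mul_assoc, Complex.I_mul_I]
    simp
  rw [hpt] at hval
  set h : ℝ → ℂ := fun x => G (Complex.exp (Complex.I * x)) / ((l ^ 2 + x ^ 2 : ℝ) : ℂ) with hh
  have hsplit : (∫ x in Set.Ioi (0:ℝ), h (-x)) + ∫ x in Set.Ioi (0:ℝ), h x = ∫ x, h x := by
    rw [integral_comp_neg_Ioi, neg_zero]
    exact intervalIntegral.integral_Iic_add_Ioi hint.integrableOn hint.integrableOn
  have hfold : ∀ x : ℝ, ((G (Complex.exp (Complex.I * x)) + G (Complex.exp (-Complex.I * x))) / 2)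
      / ((l ^ 2 + x ^ 2 : ℝ) : ℂ) = (1 / 2) * (h (-x) + h x) := by
    intro x
    simp only [hh, Complex.ofReal_neg, mul_neg, neg_mul, neg_sq]
    ring
  rw [integral_Ici_eq_integral_Ioi]
  simp_rw [hfold]
  rw [integral_const_mul, integral_add hint.comp_neg.integrableOn hint.integrableOn, hsplit, hval]
  push_cast
  ring
end

section
/- Let G : Ω → ℂ be an analytic function on an open set Ω ⊆ ℂ containing the closed unit disk {z : |z| ≤ 1}, and define g_s : ℝ → ℂ by g_s(θ) = (G(e^{iθ}) − G(e^{−iθ}))/(2i). Then for every λ > 0 the improper integral ∫₀^∞ x·g_s(x)/(λ² + x²) dx converges and equals (π/2)·(G(e^{−λ}) − G(0)). -/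
/-!
The integrand is even, and with `H = G - G(0)` its integral over `[0, a]` is `1 / (2i)` times the
integral of `z H(e^{iz}) / (z² + l²)` over `[-a, a]`. In the closed upper half plane the only
singularity is a simple pole at `il` with residue `H(e^{-l}) / 2`. Subtracting
`i l H(e^{-l}) / (z² + l²)`, which has the same residue and an explicit arctangent integral over
the real line, leaves a function `poleFree` that is holomorphic on the closed upper half plane.

Since `H` vanishes at `0`, a Schwarz-type bound `|H(w)| ≤ C |w|` on the unit disk gives
`|H(e^{iz})| ≤ C e^{-Im z}`. By Cauchy's theorem on the rectangle `[-a, a] × [0, a]`, the integral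
of `poleFree` over `[-a, a]` is then `O(1 / a)` up to an exponentially small term
(`norm_integral_poleFree_le`). The subtracted term contributes
`l H(e^{-l}) ∫₀^∞ dx / (l² + x²) = (π / 2) H(e^{-l})`.
-/

open MeasureTheory Filter Topology

/-- A Schwarz-type bound: `C` bounds the difference quotient of `G` at `0`, which extends
continuously to the compact unit disk. -/
theorem exists_norm_sub_le_of_closedBall {Ω : Set ℂ} (hΩ : IsOpen Ω)
    (hball : Metric.closedBall (0 : ℂ) 1 ⊆ Ω) {G : ℂ → ℂ} (hG : DifferentiableOn ℂ G Ω) :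
    ∃ C : ℝ, 0 ≤ C ∧ ∀ w : ℂ, ‖w‖ ≤ 1 → ‖G w - G 0‖ ≤ C * ‖w‖ := by
  have h0 : Ω ∈ 𝓝 (0 : ℂ) := hΩ.mem_nhds (hball (by simp))
  have hd : DifferentiableOn ℂ (dslope G 0) Ω := (Complex.differentiableOn_dslope h0).2 hG
  obtain ⟨C, hC⟩ := (isCompact_closedBall (0 : ℂ) 1).exists_bound_of_continuousOn
    (hd.continuousOn.mono hball)
  refine ⟨C, (norm_nonneg _).trans (hC 0 (by simp)), fun w hw => ?_⟩
  have h := hC w (by simpa using hw)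
  have e : G w - G 0 = w * dslope G 0 w := by
    simpa using (sub_smul_dslope G 0 w).symm
  rw [e, norm_mul, mul_comm]
  gcongr

theorem norm_exp_I_mul (z : ℂ) : ‖Complex.exp (Complex.I * z)‖ = Real.exp (-z.im) := by
  simp [Complex.norm_exp]

/-- The integrand `z (G(e^{iz}) - G(0)) / (z² + l²)` minus a multiple of `1 / (z² + l²)` chosen to
cancel the residue at `il`; written with `dslope` so that the removable singularity at `il` is
filled in. -/
noncomputable def poleFree (G : ℂ → ℂ) (l : ℝ) (z : ℂ) : ℂ :=
  dslope (fun z : ℂ => z * (G (Complex.exp (Complex.I * z)) - G 0)) (Complex.I * l) z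
    / (z + Complex.I * l)

theorem poleFree_eq {G : ℂ → ℂ} {l : ℝ} {z : ℂ} (hne : z ≠ Complex.I * l) :
    poleFree G l z = (z * (G (Complex.exp (Complex.I * z)) - G 0)
      - Complex.I * l * (G (Real.exp (-l)) - G 0)) / (z ^ 2 + (l : ℂ) ^ 2) := by
  have e : z ^ 2 + (l : ℂ) ^ 2 = (z - Complex.I * l) * (z + Complex.I * l) := by
    linear_combination (l : ℂ) ^ 2 * Complex.I_sq
  have e2 : Complex.exp (Complex.I * (Complex.I * l)) = (Real.exp (-l) : ℂ) := by
    rw [← mul_assoc, Complex.I_mul_I]; push_cast; ring_nf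
  rw [poleFree, dslope_of_ne _ hne, slope_def_field, e2, e, div_div]

theorem differentiableOn_poleFree {Ω : Set ℂ} (hΩ : IsOpen Ω)
    (hball : Metric.closedBall (0 : ℂ) 1 ⊆ Ω) {G : ℂ → ℂ} (hG : DifferentiableOn ℂ G Ω)
    {l : ℝ} (hl : 0 < l) : DifferentiableOn ℂ (poleFree G l) {z | 0 ≤ z.im} := by
  have hU : IsOpen ((fun z : ℂ => Complex.exp (Complex.I * z)) ⁻¹' Ω) :=
    hΩ.preimage (by fun_prop)
  have hsub : {z : ℂ | 0 ≤ z.im} ⊆ (fun z : ℂ => Complex.exp (Complex.I * z)) ⁻¹' Ω := by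
    intro z hz
    apply hball
    simpa [norm_exp_I_mul] using hz
  have hN : DifferentiableOn ℂ (fun z : ℂ => z * (G (Complex.exp (Complex.I * z)) - G 0))
      ((fun z : ℂ => Complex.exp (Complex.I * z)) ⁻¹' Ω) := by
    refine differentiableOn_id.mul (DifferentiableOn.sub_const ?_ _)
    exact hG.comp (by fun_prop) fun z hz => hz
  have hmem : Complex.I * l ∈ (fun z : ℂ => Complex.exp (Complex.I * z)) ⁻¹' Ω :=
    hsub (by simpa using hl.le)
  refine DifferentiableOn.div
    (((Complex.differentiableOn_dslope (hU.mem_nhds hmem)).2 hN).mono hsub) (by fun_prop) ?_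
  intro z hz h
  have := congrArg Complex.im h
  simp at this hz
  linarith

/-- The bound used on the three sides of the rectangle off the real axis: there
`|z² + l²| ≥ |z|² - l² ≥ a² / 2`. -/
theorem norm_poleFree_le {G : ℂ → ℂ} {l C a : ℝ} (hl : 0 < l)
    (hC : ∀ w : ℂ, ‖w‖ ≤ 1 → ‖G w - G 0‖ ≤ C * ‖w‖)
    (ha : 2 * l ≤ a) {z : ℂ} (hz : 0 ≤ z.im) (h1 : a ≤ ‖z‖) (h2 : ‖z‖ ≤ 2 * a) :
    ‖poleFree G l z‖ ≤ 4 * C / a * Real.exp (-z.im)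
      + 2 * (l * ‖G (Real.exp (-l)) - G 0‖) / a ^ 2 := by
  have ha0 : 0 < a := by linarith
  have hne : z ≠ Complex.I * l := by
    rintro rfl
    simp [abs_of_pos hl] at h1
    linarith
  have hG : ‖G (Complex.exp (Complex.I * z)) - G 0‖ ≤ C * Real.exp (-z.im) := by
    rw [← norm_exp_I_mul]
    apply hC
    simpa [norm_exp_I_mul] using hz
  have hden : a ^ 2 / 2 ≤ ‖z ^ 2 + (l : ℂ) ^ 2‖ := by
    have h := norm_sub_le_norm_add (z ^ 2) ((l : ℂ) ^ 2)
    simp only [norm_pow, Complex.norm_real, Real.norm_eq_abs, sq_abs] at h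
    nlinarith
  have hnum : ‖z * (G (Complex.exp (Complex.I * z)) - G 0)
      - Complex.I * l * (G (Real.exp (-l)) - G 0)‖
      ≤ 2 * a * (C * Real.exp (-z.im)) + l * ‖G (Real.exp (-l)) - G 0‖ := by
    refine (norm_sub_le _ _).trans (add_le_add ?_ ?_)
    · rw [norm_mul]; gcongr
    · simp [abs_of_pos hl]
  rw [poleFree_eq hne, norm_div]
  calc _ ≤ (2 * a * (C * Real.exp (-z.im)) + l * ‖G (Real.exp (-l)) - G 0‖) / (a ^ 2 / 2) :=
        div_le_div₀ ((norm_nonneg _).trans hnum) hnum (by positivity) hden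
    _ = _ := by field_simp; ring

/-- Cauchy's theorem on the rectangle `[-a, a] × [0, a]`. On the vertical sides the factor
`e^{-Im z}` is integrated rather than bounded, which is what gains the decay `1 / a`. -/
theorem norm_integral_poleFree_le {Ω : Set ℂ} (hΩ : IsOpen Ω)
    (hball : Metric.closedBall (0 : ℂ) 1 ⊆ Ω) {G : ℂ → ℂ} (hG : DifferentiableOn ℂ G Ω)
    {l C a : ℝ} (hl : 0 < l) (hC0 : 0 ≤ C)
    (hC : ∀ w : ℂ, ‖w‖ ≤ 1 → ‖G w - G 0‖ ≤ C * ‖w‖) (ha : 2 * l ≤ a) :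
    ‖∫ x in (-a)..a, poleFree G l x‖ ≤
      8 * C * Real.exp (-a) + (8 * C + 8 * (l * ‖G (Real.exp (-l)) - G 0‖)) / a := by
  have ha0 : 0 < a := by linarith
  set c := l * ‖G (Real.exp (-l)) - G 0‖ with hc
  have hrect := Complex.integral_boundary_rect_eq_zero_of_differentiableOn (poleFree G l)
    (⟨-a, 0⟩ : ℂ) ⟨a, a⟩ ((differentiableOn_poleFree hΩ hball hG hl).mono (by
      intro z hz
      have := (Complex.mem_reProdIm.1 hz).2
      simp only [Set.uIcc_of_le ha0.le] at this
      exact this.1))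
  simp only [Complex.ofReal_zero, zero_mul, add_zero] at hrect
  have htop : ‖∫ x in (-a)..a, poleFree G l (x + a * Complex.I)‖
      ≤ (4 * C / a * Real.exp (-a) + 2 * c / a ^ 2) * |a - -a| := by
    refine intervalIntegral.norm_integral_le_of_norm_le_const fun x hx => ?_
    rw [Set.uIoc_of_le (by linarith)] at hx
    have him : ((x : ℂ) + a * Complex.I).im = a := by simp
    have hre : ((x : ℂ) + a * Complex.I).re = x := by simp
    have h := norm_poleFree_le (z := x + a * Complex.I) hl hC ha (by rw [him]; exact ha0.le)
      (by
        have := Complex.abs_im_le_norm ((x : ℂ) + a * Complex.I)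
        rw [him] at this; exact (le_abs_self a).trans this)
      (by
        refine (Complex.norm_le_abs_re_add_abs_im _).trans ?_
        rw [him, hre, abs_of_pos ha0]
        have := abs_le.2 ⟨hx.1.le, hx.2⟩
        linarith)
    rwa [him] at h
  have hside : ∀ s : ℝ, |s| = a → ‖∫ y in (0 : ℝ)..a, poleFree G l (s + y * Complex.I)‖
      ≤ 4 * C / a + 2 * c / a := by
    intro s hs
    have h := intervalIntegral.norm_integral_le_of_norm_le (μ := volume)
      (f := fun y : ℝ => poleFree G l (s + y * Complex.I))
      (g := fun y : ℝ => 4 * C / a * Real.exp (-y) + 2 * c / a ^ 2) ha0.le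
      (ae_of_all _ fun y hy => by
        have him : ((s : ℂ) + y * Complex.I).im = y := by simp
        have hre : ((s : ℂ) + y * Complex.I).re = s := by simp
        have h := norm_poleFree_le (z := s + y * Complex.I) hl hC ha
          (by rw [him]; exact hy.1.le)
          (by
            have := Complex.abs_re_le_norm ((s : ℂ) + y * Complex.I)
            rwa [hre, hs] at this)
          (by
            refine (Complex.norm_le_abs_re_add_abs_im _).trans ?_
            rw [him, hre, hs, abs_of_pos hy.1]
            linarith [hy.2])
        rwa [him] at h)
      (Continuous.intervalIntegrable (by fun_prop) _ _)
    refine h.trans ?_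
    have hexp : ∫ y in (0 : ℝ)..a, Real.exp (-y) = 1 - Real.exp (-a) := by
      rw [intervalIntegral.integral_comp_neg (fun y => Real.exp y), integral_exp]; simp
    rw [intervalIntegral.integral_add (Continuous.intervalIntegrable (by fun_prop) _ _)
      (Continuous.intervalIntegrable (by fun_prop) _ _), intervalIntegral.integral_const_mul, hexp,
      intervalIntegral.integral_const, smul_eq_mul]
    have h1 : 4 * C / a * (1 - Real.exp (-a)) ≤ 4 * C / a * 1 := by
      have := Real.exp_pos (-a)
      gcongr
      linarith
    have h2 : (a - 0) * (2 * c / a ^ 2) = 2 * c / a := by field_simp; ring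
    linarith
  have hR := hside a (abs_of_pos ha0)
  have hL := hside (-a) (by rw [abs_neg, abs_of_pos ha0])
  have e : ∫ x in (-a)..a, poleFree G l x
      = (∫ x in (-a)..a, poleFree G l (x + a * Complex.I))
        - Complex.I * (∫ y in (0 : ℝ)..a, poleFree G l (a + y * Complex.I))
        + Complex.I * (∫ y in (0 : ℝ)..a, poleFree G l ((-a : ℝ) + y * Complex.I)) := by
    simp only [smul_eq_mul] at hrect
    linear_combination hrect
  rw [e]
  refine (norm_add_le _ _).trans ((add_le_add_left (norm_sub_le _ _) _).trans ?_)
  rw [norm_mul, norm_mul, Complex.norm_I, one_mul, one_mul]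
  have h3 : (4 * C / a * Real.exp (-a) + 2 * c / a ^ 2) * |a - -a|
      = 8 * C * Real.exp (-a) + 4 * c / a := by
    rw [abs_of_pos (by linarith)]; field_simp; ring
  have h4 : (8 * C + 8 * c) / a = 2 * (4 * C / a + 2 * c / a) + 4 * c / a := by ring
  linarith

theorem tendsto_integral_poleFree {Ω : Set ℂ} (hΩ : IsOpen Ω)
    (hball : Metric.closedBall (0 : ℂ) 1 ⊆ Ω) {G : ℂ → ℂ} (hG : DifferentiableOn ℂ G Ω)
    {l : ℝ} (hl : 0 < l) :
    Tendsto (fun a : ℝ => ∫ x in (-a)..a, poleFree G l x) atTop (𝓝 0) := by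
  obtain ⟨C, hC0, hC⟩ := exists_norm_sub_le_of_closedBall hΩ hball hG
  refine squeeze_zero_norm' ((eventually_ge_atTop (2 * l)).mono fun a ha =>
    norm_integral_poleFree_le hΩ hball hG hl hC0 hC ha) ?_
  have h1 : Tendsto (fun a : ℝ => 8 * C * Real.exp (-a)) atTop (𝓝 (8 * C * 0)) :=
    (Real.tendsto_exp_neg_atTop_nhds_zero).const_mul _
  simpa using h1.add (tendsto_id.const_div_atTop (8 * C + 8 * (l * ‖G (Real.exp (-l)) - G 0‖)))

theorem tendsto_integral_inv_sq_add_sq {l : ℝ} (hl : 0 < l) :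
    Tendsto (fun a : ℝ => ∫ x in (0 : ℝ)..a, 1 / (l ^ 2 + x ^ 2)) atTop
      (𝓝 (Real.pi / (2 * l))) := by
  have h : ∀ a : ℝ, ∫ x in (0 : ℝ)..a, 1 / (l ^ 2 + x ^ 2) = l⁻¹ * Real.arctan (a / l) := by
    intro a
    have e : ∀ x : ℝ, 1 / (l ^ 2 + x ^ 2) = (l ^ 2)⁻¹ * (1 / (1 + (x / l) ^ 2)) := by
      intro x
      have : 0 < l ^ 2 + x ^ 2 := by positivity
      field_simp
    simp_rw [e]
    rw [intervalIntegral.integral_const_mul,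
      intervalIntegral.integral_comp_div (fun x => 1 / (1 + x ^ 2)) hl.ne',
      integral_one_div_one_add_sq]
    simp
    field_simp
  simp_rw [h]
  have h1 : Tendsto (fun a : ℝ => Real.arctan (a / l)) atTop (𝓝 (Real.pi / 2)) :=
    (tendsto_nhds_of_tendsto_nhdsWithin Real.tendsto_arctan_atTop).comp
      (tendsto_id.atTop_div_const hl)
  have h2 := h1.const_mul l⁻¹
  have e : Real.pi / (2 * l) = l⁻¹ * (Real.pi / 2) := by field_simp
  rwa [e]

theorem stmt13 (Ω : Set ℂ) (hΩ : IsOpen Ω) (hball : Metric.closedBall (0 : ℂ) 1 ⊆ Ω)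
    (G : ℂ → ℂ) (hG : DifferentiableOn ℂ G Ω)
    (l : ℝ) (hl : 0 < l) :
    Tendsto (fun a : ℝ => ∫ x in (0:ℝ)..a,
        (x : ℂ) * ((G (Complex.exp (Complex.I * x)) - G (Complex.exp (-Complex.I * x)))
          / (2 * Complex.I)) / ((l ^ 2 + x ^ 2 : ℝ) : ℂ)) atTop
      (𝓝 ((Real.pi / 2 : ℝ) * (G (Real.exp (-l)) - G 0))) := by
  set c := G (Real.exp (-l)) - G 0 with hc
  have hcont : Continuous fun x : ℝ => poleFree G l x :=
    (differentiableOn_poleFree hΩ hball hG hl).continuousOn.comp_continuous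
      Complex.continuous_ofReal fun x => by simp
  have hint : ∀ s t : ℝ, IntervalIntegrable (fun x : ℝ => poleFree G l x) volume s t :=
    fun s t => hcont.intervalIntegrable s t
  have hcontneg : Continuous fun x : ℝ => poleFree G l ((-x : ℝ) : ℂ) :=
    hcont.comp continuous_neg
  have hJint : ∀ a : ℝ, IntervalIntegrable
      (fun x : ℝ => l * c * ((1 / (l ^ 2 + x ^ 2) : ℝ) : ℂ)) volume 0 a := by
    intro a
    refine Continuous.intervalIntegrable (continuous_const.mul
      (Complex.continuous_ofReal.comp ?_)) _ _
    exact continuous_const.div (by fun_prop) fun x => by positivity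
  have hfold : ∀ a : ℝ, ∫ x in (-a)..a, poleFree G l x
      = ∫ x in (0 : ℝ)..a, (poleFree G l x + poleFree G l ((-x : ℝ) : ℂ)) := by
    intro a
    rw [intervalIntegral.integral_add (hint _ _) (hcontneg.intervalIntegrable _ _),
      intervalIntegral.integral_comp_neg (fun x : ℝ => poleFree G l x), neg_zero, add_comm,
      intervalIntegral.integral_add_adjacent_intervals (hint _ _) (hint _ _)]
  have hreal : ∀ x : ℝ, poleFree G l x = ((x : ℂ) * (G (Complex.exp (Complex.I * x)) - G 0)
      - Complex.I * l * c) / ((x : ℂ) ^ 2 + (l : ℂ) ^ 2) := fun x =>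
    poleFree_eq fun h => by
      have := congrArg Complex.im h
      simp at this
      exact hl.ne this
  have hsum : ∀ a : ℝ, IntervalIntegrable (fun x : ℝ => (2 * Complex.I)⁻¹ *
      (poleFree G l x + poleFree G l ((-x : ℝ) : ℂ))) volume 0 a := fun a =>
    (continuous_const.mul (hcont.add hcontneg)).intervalIntegrable _ _
  -- Folding `[-a, a]` onto `[0, a]` turns `z (G(e^{iz}) - G(0))` into `2i x g_s(x)`.
  have hkey : ∀ a : ℝ, (∫ x in (0:ℝ)..a,
        (x : ℂ) * ((G (Complex.exp (Complex.I * x)) - G (Complex.exp (-Complex.I * x)))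
          / (2 * Complex.I)) / ((l ^ 2 + x ^ 2 : ℝ) : ℂ))
      = (2 * Complex.I)⁻¹ * (∫ x in (-a)..a, poleFree G l x)
        + l * c * ((∫ x in (0 : ℝ)..a, 1 / (l ^ 2 + x ^ 2) : ℝ) : ℂ) := by
    intro a
    rw [hfold, ← intervalIntegral.integral_ofReal, ← intervalIntegral.integral_const_mul,
      ← intervalIntegral.integral_const_mul, ← intervalIntegral.integral_add (hsum a) (hJint a)]
    congr 1
    ext x
    have hx : (x : ℂ) ^ 2 + (l : ℂ) ^ 2 ≠ 0 := by
      have : x ^ 2 + l ^ 2 ≠ 0 := by positivity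
      exact_mod_cast this
    have hx' : (l : ℂ) ^ 2 + (x : ℂ) ^ 2 ≠ 0 := by rwa [add_comm]
    rw [hreal, hreal]
    push_cast
    rw [neg_mul, mul_neg, neg_sq, add_comm ((l : ℂ) ^ 2)]
    field_simp
    ring
  simp_rw [hkey]
  have hJ := (Complex.continuous_ofReal.tendsto _).comp (tendsto_integral_inv_sq_add_sq hl)
  have hlim := ((tendsto_integral_poleFree hΩ hball hG hl).const_mul (2 * Complex.I)⁻¹).add
    (hJ.const_mul (l * c))
  have hval : ((Real.pi / 2 : ℝ) : ℂ) * c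
      = (2 * Complex.I)⁻¹ * 0 + l * c * ((Real.pi / (2 * l) : ℝ) : ℂ) := by
    have : (l : ℂ) ≠ 0 := by exact_mod_cast hl.ne'
    push_cast
    field_simp
    ring
  rw [hval]
  exact hlim
end

section
/- ∫₀^{π/2} dθ/(1 + sin²(tan θ)) = (π/(2√2))·(e² + 3 − 2√2)/(e² − 3 + 2√2). -/
/-!
Put `q = 3 - 2√2` and `G z = (1 + q E(z)) / (1 - q E(z))` with `E(z) = exp (2 (z - 1) / (z + 1))`.
The Cayley transform `z ↦ (z - 1) / (z + 1)` maps the open unit disc into the left half plane, so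
`‖E‖ ≤ 1` there, and `G` is holomorphic and bounded on the disc. On the unit circle it sends
`exp (2iθ)` to `i tan θ`, so that `E = exp (2i tan θ)`, and the choice of `q` gives
`Re G = √2 / (1 + sin² (tan θ))`.

The mean value property on circles of radius `r < 1`, together with dominated convergence as
`r → 1`, shows that the average of `G` over the unit circle is
`G 0 = (1 + q e⁻²) / (1 - q e⁻²)`; the essential singularity at `-1` does no harm because `G` is
bounded. Taking real parts and using the symmetry `θ ↦ π - θ` yields the integral.
-/

open MeasureTheory Filter Topology

/-- The mean value property at the boundary of the disc, for a bounded holomorphic function that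
extends continuously to the unit circle except at `-1`. -/
lemma circleAverage_eq_of_bounded {G : ℂ → ℂ} {M : ℝ}
    (hd : DifferentiableOn ℂ G (Metric.ball 0 1)) (hM : ∀ z ∈ Metric.ball (0 : ℂ) 1, ‖G z‖ ≤ M)
    (hc : ∀ z : ℂ, ‖z‖ = 1 → z ≠ -1 → ContinuousAt G z) :
    Real.circleAverage G 0 1 = G 0 := by
  have hev : ∀ᶠ r : ℝ in 𝓝[<] 1, 0 < r ∧ r < 1 := by
    filter_upwards [Ioo_mem_nhdsLT (zero_lt_one' ℝ)] with r hr using hr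
  have hmem : ∀ r : ℝ, 0 < r → r < 1 → ∀ t, circleMap 0 r t ∈ Metric.ball (0 : ℂ) 1 := by
    intro r h0 h1 t
    simpa [abs_of_pos h0] using h1
  have hlim : Tendsto (fun r : ℝ => Real.circleAverage G 0 r) (𝓝[<] 1)
      (𝓝 (Real.circleAverage G 0 1)) := by
    unfold Real.circleAverage
    refine Tendsto.const_smul ?_ _
    refine intervalIntegral.tendsto_integral_filter_of_dominated_convergence (fun _ => M)
      ?_ ?_ (by simp) ?_
    · filter_upwards [hev] with r hr
      have : Continuous (fun t => G (circleMap 0 r t)) :=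
        hd.continuousOn.comp_continuous (continuous_circleMap 0 r) (hmem r hr.1 hr.2)
      exact this.aestronglyMeasurable
    · filter_upwards [hev] with r hr
      exact ae_of_all _ fun t _ => hM _ (hmem r hr.1 hr.2 t)
    · have hcount : (circleMap 0 1 ⁻¹' {(-1 : ℂ)}).Countable :=
        (Set.countable_singleton _).preimage_circleMap 0 one_ne_zero
      filter_upwards [hcount.ae_notMem volume] with t ht _
      have h1 : ContinuousAt G (circleMap 0 1 t) := hc _ (by simp) (by simpa using ht)
      have h2 : Continuous fun r : ℝ => circleMap 0 r t := by
        unfold circleMap; fun_prop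
      exact h1.tendsto.comp ((h2.tendsto 1).mono_left nhdsWithin_le_nhds)
  refine tendsto_nhds_unique hlim (tendsto_const_nhds.congr' ?_)
  filter_upwards [hev] with r hr
  refine (DiffContOnCl.circleAverage (DifferentiableOn.diffContOnCl (hd.mono ?_))).symm
  rw [closure_ball _ (by simpa using hr.1.ne'), abs_of_pos hr.1]
  exact Metric.closedBall_subset_ball hr.2

/-- With the conventions `x / 0 = 0` and `tan (π / 2) = 0` this holds for every `t`. -/
lemma cayley_circleMap (t : ℝ) :
    (circleMap 0 1 t - 1) / (circleMap 0 1 t + 1) = (Real.tan (t / 2) : ℂ) * Complex.I := by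
  have hw : circleMap 0 1 t
      = ((Real.cos (t / 2) : ℂ) + (Real.sin (t / 2) : ℂ) * Complex.I) ^ 2 := by
    rw [Complex.ofReal_cos, Complex.ofReal_sin, ← Complex.exp_mul_I, ← Complex.exp_nat_mul]
    simp only [circleMap]
    push_cast
    ring_nf
  have hu : (Real.cos (t / 2) : ℂ) + (Real.sin (t / 2) : ℂ) * Complex.I ≠ 0 := by
    rw [Complex.ofReal_cos, Complex.ofReal_sin, ← Complex.exp_mul_I]
    exact Complex.exp_ne_zero _
  have hcs : (Real.cos (t / 2) : ℂ) ^ 2 + (Real.sin (t / 2) : ℂ) ^ 2 = 1 := by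
    exact_mod_cast Real.cos_sq_add_sin_sq (t / 2)
  rw [hw, Real.tan_eq_sin_div_cos, Complex.ofReal_div]
  set c : ℂ := (Real.cos (t / 2) : ℂ)
  set s : ℂ := (Real.sin (t / 2) : ℂ)
  have hI := Complex.I_sq
  have e1 : (c + s * Complex.I) ^ 2 + 1 = 2 * c * (c + s * Complex.I) := by
    linear_combination s ^ 2 * hI - hcs
  have e2 : (c + s * Complex.I) ^ 2 - 1 = 2 * (s * Complex.I) * (c + s * Complex.I) := by
    linear_combination hcs - s ^ 2 * hI
  rw [e1, e2, mul_div_mul_right _ _ hu, mul_div_mul_left _ _ two_ne_zero]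
  ring

/-- The Cayley transform maps the closed unit disc into the closed left half plane. -/
lemma cayley_re_nonpos {z : ℂ} (hz : ‖z‖ ≤ 1) : ((z - 1) / (z + 1)).re ≤ 0 := by
  have h : z.re * z.re + z.im * z.im ≤ 1 := by
    rw [← Complex.normSq_apply, Complex.normSq_eq_norm_sq]
    exact pow_le_one₀ (norm_nonneg z) hz
  rw [Complex.div_re, ← add_div]
  refine div_nonpos_of_nonpos_of_nonneg ?_ (Complex.normSq_nonneg _)
  simp
  nlinarith

lemma norm_exp_cayley_le {z : ℂ} (hz : ‖z‖ ≤ 1) :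
    ‖Complex.exp (2 * ((z - 1) / (z + 1)))‖ ≤ 1 := by
  rw [Complex.norm_exp, Real.exp_le_one_iff]
  have := cayley_re_nonpos hz
  simp only [Complex.mul_re, Complex.re_ofNat, Complex.im_ofNat, zero_mul, sub_zero]
  linarith

/-- The bounded holomorphic function on the disc whose boundary real part is the Poisson kernel
with parameter `q`, composed with `θ ↦ 2 tan θ`. -/
noncomputable def discKernel (q : ℝ) (z : ℂ) : ℂ :=
  (1 + q * Complex.exp (2 * ((z - 1) / (z + 1)))) /
    (1 - q * Complex.exp (2 * ((z - 1) / (z + 1))))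

lemma le_norm_one_sub {q : ℝ} (h0 : 0 ≤ q) {E : ℂ} (hE : ‖E‖ ≤ 1) : 1 - q ≤ ‖1 - q * E‖ := by
  have h := norm_sub_norm_le (1 : ℂ) (q * E)
  rw [norm_mul, Complex.norm_real, Real.norm_of_nonneg h0, norm_one] at h
  nlinarith

lemma one_sub_ne_zero {q : ℝ} (h0 : 0 ≤ q) (h1 : q < 1) {E : ℂ} (hE : ‖E‖ ≤ 1) :
    1 - q * E ≠ 0 := by
  rw [← norm_pos_iff]
  linarith [le_norm_one_sub h0 hE]

lemma norm_discKernel_le {q : ℝ} (h0 : 0 ≤ q) (h1 : q < 1) {z : ℂ} (hz : ‖z‖ ≤ 1) :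
    ‖discKernel q z‖ ≤ (1 + q) / (1 - q) := by
  have hE := norm_exp_cayley_le hz
  rw [discKernel, norm_div]
  refine div_le_div₀ (by linarith) ?_ (by linarith) (le_norm_one_sub h0 hE)
  refine (norm_add_le _ _).trans ?_
  rw [norm_mul, Complex.norm_real, Real.norm_of_nonneg h0, norm_one]
  nlinarith

lemma differentiableAt_discKernel {q : ℝ} (h0 : 0 ≤ q) (h1 : q < 1) {z : ℂ} (hz : ‖z‖ ≤ 1)
    (hz1 : z ≠ -1) : DifferentiableAt ℂ (discKernel q) z := by
  have h2 : z + 1 ≠ 0 := fun h => hz1 (eq_neg_of_add_eq_zero_left h)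
  have h3 := one_sub_ne_zero h0 h1 (norm_exp_cayley_le hz)
  unfold discKernel
  fun_prop (disch := assumption)

lemma circleAverage_discKernel {q : ℝ} (h0 : 0 ≤ q) (h1 : q < 1) :
    Real.circleAverage (discKernel q) 0 1 = discKernel q 0 := by
  refine circleAverage_eq_of_bounded (M := (1 + q) / (1 - q)) ?_ ?_ ?_
  · intro z hz
    have hz' : ‖z‖ < 1 := by simpa using hz
    refine (differentiableAt_discKernel h0 h1 hz'.le ?_).differentiableWithinAt
    rintro rfl
    simp at hz'
  · intro z hz
    have hz' : ‖z‖ < 1 := by simpa using hz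
    exact norm_discKernel_le h0 h1 hz'.le
  · intro z hz hz1
    exact (differentiableAt_discKernel h0 h1 hz.le hz1).continuousAt

/-- The value `q = 3 - 2√2` is the root of `q² - 6q + 1` in the unit interval, which turns the
Poisson kernel into a multiple of `1 / (1 + sin²)`. -/
lemma discKernel_circleMap_re (t : ℝ) :
    (discKernel (3 - 2 * √2) (circleMap 0 1 t)).re
      = √2 * (1 / (1 + Real.sin (Real.tan (t / 2)) ^ 2)) := by
  have hs : √2 ^ 2 = 2 := Real.sq_sqrt (by norm_num)
  have hslt : √2 < 3 / 2 := by nlinarith [Real.sqrt_nonneg 2]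
  have hsgt : 1 < √2 := by nlinarith [Real.sqrt_nonneg 2]
  rw [discKernel, cayley_circleMap]
  set x := Real.tan (t / 2)
  have hE : Complex.exp (2 * ((x : ℂ) * Complex.I)) = (⟨Real.cos (2 * x), Real.sin (2 * x)⟩ : ℂ) := by
    rw [show 2 * ((x : ℂ) * Complex.I) = ((2 * x : ℝ) : ℂ) * Complex.I by push_cast; ring]
    apply Complex.ext
    · exact Complex.exp_ofReal_mul_I_re _
    · exact Complex.exp_ofReal_mul_I_im _
  have hcs := Real.cos_sq_add_sin_sq (2 * x)
  have hcos : Real.cos (2 * x) = 1 - 2 * Real.sin x ^ 2 := by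
    rw [Real.cos_two_mul, Real.cos_sq']; ring
  rw [hE, Complex.div_re, ← add_div, Complex.normSq_apply]
  simp only [Complex.add_re, Complex.sub_re, Complex.mul_re, Complex.add_im, Complex.sub_im,
    Complex.mul_im, Complex.one_re, Complex.one_im, Complex.ofReal_re, Complex.ofReal_im,
    zero_mul, sub_zero, add_zero, zero_add, zero_sub]
  set q : ℝ := 3 - 2 * √2 with hq
  have hq2 : q ^ 2 = 6 * q - 1 := by rw [hq]; linear_combination 4 * hs
  have hqpos : 0 < q := by linarith
  have hpos : 0 < 1 + Real.sin x ^ 2 := by positivity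
  have hnum : (1 + q * Real.cos (2 * x)) * (1 - q * Real.cos (2 * x))
      + q * Real.sin (2 * x) * -(q * Real.sin (2 * x)) = √2 * (4 * q) := by
    rw [show √2 * (4 * q) = 2 - 6 * q by rw [hq]; linear_combination -8 * hs]
    linear_combination -q ^ 2 * hcs - hq2
  have hden : (1 - q * Real.cos (2 * x)) * (1 - q * Real.cos (2 * x))
      + -(q * Real.sin (2 * x)) * -(q * Real.sin (2 * x)) = (1 + Real.sin x ^ 2) * (4 * q) := by
    linear_combination q ^ 2 * hcs + hq2 - 2 * q * hcos
  rw [hnum, hden, mul_div_mul_right _ _ (by positivity), mul_one_div]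

theorem stmt14 :
    (∫ θ in (0:ℝ)..(Real.pi / 2), 1 / (1 + Real.sin (Real.tan θ) ^ 2))
      = Real.pi / (2 * Real.sqrt 2) *
        ((Real.exp 1 ^ 2 + 3 - 2 * Real.sqrt 2) / (Real.exp 1 ^ 2 - 3 + 2 * Real.sqrt 2)) := by
  have hs : √2 ^ 2 = 2 := Real.sq_sqrt (by norm_num)
  have hslt : √2 < 3 / 2 := by nlinarith [Real.sqrt_nonneg 2]
  have hsgt : 1 < √2 := by nlinarith [Real.sqrt_nonneg 2]
  have hq0 : 0 ≤ 3 - 2 * √2 := by linarith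
  have hq1 : 3 - 2 * √2 < 1 := by linarith
  have hmtan : Measurable Real.tan := by
    have : Real.tan = fun x => Real.sin x / Real.cos x := funext Real.tan_eq_sin_div_cos
    rw [this]; fun_prop
  set f : ℝ → ℝ := fun θ => 1 / (1 + Real.sin (Real.tan θ) ^ 2) with hf
  have hfm : Measurable f := by fun_prop
  have hfint : ∀ a b, IntervalIntegrable f volume a b := by
    intro a b
    refine (intervalIntegrable_const (c := (1 : ℝ))).mono_fun hfm.aestronglyMeasurable
      (ae_of_all _ fun θ => ?_)
    have hp : 0 < 1 + Real.sin (Real.tan θ) ^ 2 := by positivity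
    have h1 : f θ ≤ 1 := (div_le_one hp).2 (by nlinarith [sq_nonneg (Real.sin (Real.tan θ))])
    have h0 : 0 ≤ f θ := (one_div_pos.2 hp).le
    simpa [abs_of_nonneg h0] using h1
  have hsymm : ∫ θ in (Real.pi / 2)..Real.pi, f θ = ∫ θ in (0:ℝ)..(Real.pi / 2), f θ := by
    have h := intervalIntegral.integral_comp_sub_left (a := 0) (b := Real.pi / 2) f Real.pi
    rw [sub_zero, sub_half] at h
    rw [← h]
    simp [hf, Real.tan_pi_sub]
  have hfull : ∫ t in (0:ℝ)..(2 * Real.pi), f (t / 2)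
      = 4 * ∫ θ in (0:ℝ)..(Real.pi / 2), f θ := by
    rw [intervalIntegral.integral_comp_div f two_ne_zero, zero_div,
      mul_div_cancel_left₀ _ two_ne_zero,
      ← intervalIntegral.integral_add_adjacent_intervals (hfint 0 (Real.pi / 2)) (hfint _ _),
      hsymm, smul_eq_mul]
    ring
  have hGm : Measurable (discKernel (3 - 2 * √2)) := by
    unfold discKernel; fun_prop
  have hGint : IntervalIntegrable (fun t => discKernel (3 - 2 * √2) (circleMap 0 1 t)) volume
      0 (2 * Real.pi) := by
    refine (intervalIntegrable_const
      (c := (1 + (3 - 2 * √2)) / (1 - (3 - 2 * √2)))).mono_fun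
      (hGm.comp (continuous_circleMap 0 1).measurable).aestronglyMeasurable
      (ae_of_all _ fun t => ?_)
    exact (norm_discKernel_le hq0 hq1 (by simp)).trans (le_abs_self _)
  have hre : ((2 * Real.pi)⁻¹ : ℝ) * (√2 * ∫ t in (0:ℝ)..(2 * Real.pi), f (t / 2))
      = (discKernel (3 - 2 * √2) 0).re := by
    rw [← circleAverage_discKernel hq0 hq1, Real.circleAverage, Complex.smul_re, smul_eq_mul,
      ← intervalIntegral.integral_const_mul]
    congr 1
    have h := Complex.reCLM.intervalIntegral_comp_comm hGint
    simp only [Complex.reCLM_apply] at h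
    rw [← h]
    simp only [discKernel_circleMap_re, hf]
  have hG0 : (discKernel (3 - 2 * √2) 0).re
      = (Real.exp 1 ^ 2 + 3 - 2 * √2) / (Real.exp 1 ^ 2 - 3 + 2 * √2) := by
    have he : Real.exp (-2) = (Real.exp 1 ^ 2)⁻¹ := by
      rw [← Real.exp_nat_mul, ← Real.exp_neg]; norm_num
    have h : discKernel (3 - 2 * √2) 0
        = (((1 + (3 - 2 * √2) * Real.exp (-2)) / (1 - (3 - 2 * √2) * Real.exp (-2)) : ℝ) : ℂ) := by
      simp [discKernel]
    rw [h, Complex.ofReal_re, he]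
    have hp : Real.exp 1 ^ 2 ≠ 0 := by positivity
    rw [← mul_div_mul_right _ _ hp]
    congr 1 <;> field_simp <;> ring
  rw [hfull, hG0] at hre
  rw [← hre]
  have := Real.pi_pos
  field_simp
  ring
end

section
/- For all real numbers μ > 1 and λ > 0, the improper integral ∫₀^∞ θ·sin(θ)/((μ − cos θ)(λ² + θ²)) dθ converges and equals π/(e^{λ}·(μ + √(μ² − 1)) − 1). -/
/-!
Put `R = μ + √(μ² - 1) > 1`, so that `R² + 1 = 2 μ R`. For real `x` the function
`1 / (R e^{-ix} - 1)` has imaginary part `sin x / (2 (μ - cos x))`, hence the integrand is twice the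
imaginary part of `G x / (x² + l²)` with `G z = z / (R e^{-iz} - 1)`, and `G` is holomorphic in a
neighbourhood of the closed upper half-plane.

The only singularity of `G z / (z² + l²)` there is a simple pole at `z = il`. It is removed by
subtracting the constant `G (il)` in the numerator: the function `H z = (G z - G (il)) / (z² + l²)`
is holomorphic on the closed upper half-plane, and Cauchy's theorem on the rectangle
`[-s³, s³] × [0, s²]` gives `∫ x in -s³..s³, H x = O(1 / s)` (`norm_integral_H_le`). The subtracted
term contributes `∫ dx / (x² + l²)`, an arctangent, and `G (il) = il / (R e^l - 1)`, which yields
the value `π / (R e^l - 1)`.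
-/

open MeasureTheory Filter Topology

/-- The function `z / (R e^{-iz} - 1)`. -/
noncomputable def G (R : ℝ) (z : ℂ) : ℂ := z / (R * Complex.exp (-Complex.I * z) - 1)

/-- The function `(G z - G (il)) / (z² + l²)`, with the singularity at `z = il` removed by means of
`dslope`. -/
noncomputable def H (R l : ℝ) (z : ℂ) : ℂ :=
  dslope (G R) (l * Complex.I) z / (z + l * Complex.I)

lemma le_norm_den {R : ℝ} (hR : 1 < R) {z : ℂ} (hz : 0 ≤ z.im) :
    (R - 1) * Real.exp z.im ≤ ‖(R : ℂ) * Complex.exp (-Complex.I * z) - 1‖ := by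
  have h1 := norm_sub_norm_le ((R : ℂ) * Complex.exp (-Complex.I * z)) 1
  have h2 : ‖(R : ℂ) * Complex.exp (-Complex.I * z)‖ = R * Real.exp z.im := by
    rw [norm_mul, Complex.norm_exp, Complex.norm_real, Real.norm_of_nonneg (by linarith)]
    simp
  rw [h2, norm_one] at h1
  have := Real.one_le_exp hz
  linarith

lemma den_ne_zero {R : ℝ} (hR : 1 < R) {z : ℂ} (hz : 0 ≤ z.im) :
    (R : ℂ) * Complex.exp (-Complex.I * z) - 1 ≠ 0 := by
  rw [← norm_pos_iff]
  have := Real.exp_pos z.im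
  exact lt_of_lt_of_le (mul_pos (by linarith) this) (le_norm_den hR hz)

lemma add_ne_zero_of_im_nonneg {l : ℝ} (hl : 0 < l) {z : ℂ} (hz : 0 ≤ z.im) :
    z + l * Complex.I ≠ 0 := by
  intro h
  have := congrArg Complex.im h
  simp at this
  linarith

lemma differentiableOn_H {R l : ℝ} (hR : 1 < R) (hl : 0 < l) :
    DifferentiableOn ℂ (H R l) {z | 0 ≤ z.im} := by
  -- `dslope` is differentiable on an open neighbourhood of the closed half-plane
  set s : Set ℂ := {z | (R : ℂ) * Complex.exp (-Complex.I * z) - 1 ≠ 0} with hs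
  have hso : IsOpen s := isOpen_ne_fun (by fun_prop) (by fun_prop)
  have hsub : {z : ℂ | 0 ≤ z.im} ⊆ s := fun z hz => den_ne_zero hR hz
  have hmem : (l * Complex.I : ℂ) ∈ s := hsub (by simp [hl.le])
  have hG : DifferentiableOn ℂ (G R) s := by
    intro z hz
    have hden : DifferentiableAt ℂ
        (fun z : ℂ => (R : ℂ) * Complex.exp (-Complex.I * z) - 1) z := by fun_prop
    exact (differentiableAt_id.div hden hz).differentiableWithinAt
  have hd := (Complex.differentiableOn_dslope (hso.mem_nhds hmem)).2 hG
  exact (hd.mono hsub).div (by fun_prop) fun z hz => add_ne_zero_of_im_nonneg hl hz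

lemma norm_H_le {R l d m : ℝ} (hR : 1 < R) (hl : 0 < l) {z : ℂ} (hz : 0 ≤ z.im)
    (hd : 0 < d) (hm : 0 < m) (hdz : d ≤ ‖z - l * Complex.I‖) (hmz : m ≤ ‖z‖) :
    ‖H R l z‖ ≤ (Real.exp (-z.im) / (R - 1) + ‖G R (l * Complex.I)‖ / m) / d := by
  have hne : z ≠ l * Complex.I := by
    rintro rfl
    simp at hdz
    linarith
  have hz0 : 0 < ‖z‖ := hm.trans_le hmz
  have hle : ‖z‖ ≤ ‖z + l * Complex.I‖ := by
    rw [← sq_le_sq₀ (norm_nonneg _) (norm_nonneg _), Complex.sq_norm, Complex.sq_norm,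
      Complex.normSq_apply, Complex.normSq_apply]
    simp
    nlinarith
  have h1 : ‖G R z‖ / ‖z‖ ≤ Real.exp (-z.im) / (R - 1) := by
    rw [G, norm_div, div_div, mul_comm, ← div_div, div_self hz0.ne', Real.exp_neg,
      inv_eq_one_div, div_div, mul_comm (Real.exp _)]
    exact one_div_le_one_div_of_le (mul_pos (by linarith) (Real.exp_pos _)) (le_norm_den hR hz)
  have h2 : ‖G R (l * Complex.I)‖ / ‖z‖ ≤ ‖G R (l * Complex.I)‖ / m := by gcongr
  rw [H, dslope_of_ne _ hne, slope_def_field, norm_div, norm_div, div_right_comm]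
  apply div_le_div₀ (by
    have := (Real.exp_pos (-z.im)).le
    have : 0 < R - 1 := by linarith
    positivity) _ hd hdz
  calc _ ≤ (‖G R z‖ + ‖G R (l * Complex.I)‖) / ‖z‖ := by
        gcongr
        exact norm_sub_le _ _
    _ ≤ _ := by
        rw [add_div]
        exact add_le_add h1 h2

/-- Cauchy's theorem on `[-s³, s³] × [0, s²]`. With width `s³` and height `s²`, both the vertical
sides (of length `s²`, where `H` is `O(s⁻³)`) and the top (of length `2 s³`, where `H` is `O(s⁻⁴)`)
contribute `O(1 / s)`. -/
lemma norm_integral_H_le {R l s : ℝ} (hR : 1 < R) (hl : 0 < l) (hs : 1 ≤ s) (hsl : 2 * l ≤ s) :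
    ‖∫ x : ℝ in -s ^ 3..s ^ 3, H R l x‖ ≤ 6 * (1 / (R - 1) + ‖G R (l * Complex.I)‖) / s := by
  set C := ‖G R (l * Complex.I)‖ with hC
  have hC0 : 0 ≤ C := norm_nonneg _
  have hR1 : 0 < R - 1 := by linarith
  have hs0 : 0 < s := by linarith
  have hs2 : s ≤ s ^ 2 := by nlinarith
  have hs3 : 1 ≤ s ^ 3 := one_le_pow₀ hs
  have key := Complex.integral_boundary_rect_eq_zero_of_differentiableOn (H R l)
    ⟨-s ^ 3, 0⟩ ⟨s ^ 3, s ^ 2⟩ ((differentiableOn_H hR hl).mono (by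
      intro z hz
      have := hz.2
      simp only [Set.mem_preimage, Set.uIcc_of_le (sq_nonneg s)] at this
      exact this.1))
  simp only [Complex.ofReal_zero, zero_mul, add_zero] at key
  have side : ∀ t : ℝ, |t| = s ^ 3 →
      ‖∫ y : ℝ in (0 : ℝ)..s ^ 2, H R l (t + y * Complex.I)‖ ≤ (1 / (R - 1) + C) / s := by
    intro t ht
    have hb : ∀ y ∈ Set.uIoc (0 : ℝ) (s ^ 2), ‖H R l (t + y * Complex.I)‖ ≤
        (1 / (R - 1) + C) / s ^ 3 := by
      intro y hy
      rw [Set.uIoc_of_le (sq_nonneg s)] at hy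
      have h1 := Complex.abs_re_le_norm (t + y * Complex.I - l * Complex.I)
      have h2 := Complex.abs_re_le_norm (t + y * Complex.I)
      simp only [Complex.add_re, Complex.sub_re, Complex.mul_re, Complex.ofReal_re, Complex.I_re,
        Complex.ofReal_im, Complex.I_im, mul_zero, zero_mul, sub_zero, add_zero, ht] at h1 h2
      have hi : (t + y * Complex.I : ℂ).im = y := by simp
      refine (norm_H_le hR hl (hy.1.le.trans_eq hi.symm) (by positivity) one_pos h1 (hs3.trans h2)).trans ?_
      rw [hi, div_one]
      gcongr
      simpa using hy.1.le
    refine (intervalIntegral.norm_integral_le_of_norm_le_const hb).trans (le_of_eq ?_)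
    rw [sub_zero, abs_of_nonneg (sq_nonneg s)]
    field_simp
  have top : ‖∫ x : ℝ in -s ^ 3..s ^ 3, H R l (x + (s ^ 2 : ℝ) * Complex.I)‖ ≤
      4 * (1 / (R - 1) + C) / s := by
    have hb : ∀ x ∈ Set.uIoc (-s ^ 3) (s ^ 3), ‖H R l (x + (s ^ 2 : ℝ) * Complex.I)‖ ≤
        ((1 / s ^ 2) / (R - 1) + C / s ^ 2) / (s ^ 2 / 2) := by
      intro x _
      have h1 := (le_abs_self _).trans
        (Complex.abs_im_le_norm (x + (s ^ 2 : ℝ) * Complex.I - l * Complex.I))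
      have h2 := (le_abs_self _).trans
        (Complex.abs_im_le_norm (x + (s ^ 2 : ℝ) * Complex.I))
      have hi : (x + (s ^ 2 : ℝ) * Complex.I : ℂ).im = s ^ 2 := by
        simp only [Complex.add_im, Complex.mul_im, Complex.ofReal_re, Complex.I_re,
          Complex.ofReal_im, Complex.I_im]
        ring
      have hj : (x + (s ^ 2 : ℝ) * Complex.I - l * Complex.I : ℂ).im = s ^ 2 - l := by
        rw [Complex.sub_im, hi]
        simp
      rw [hi] at h2
      rw [hj] at h1
      refine (norm_H_le hR hl ((sq_nonneg s).trans_eq hi.symm) (d := s ^ 2 / 2) (by positivity)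
        (m := s ^ 2) (by positivity) (le_trans (by linarith) h1) h2).trans ?_
      rw [hi, Real.exp_neg, inv_eq_one_div]
      gcongr
      linarith [Real.add_one_le_exp (s ^ 2)]
    refine (intervalIntegral.norm_integral_le_of_norm_le_const hb).trans (le_of_eq ?_)
    rw [sub_neg_eq_add, abs_of_nonneg (by positivity)]
    field_simp
    ring
  have e1 := side (s ^ 3) (abs_of_nonneg (by positivity))
  have e2 := side (-s ^ 3) (by rw [abs_neg, abs_of_nonneg (by positivity)])
  set A := ∫ x : ℝ in -s ^ 3..s ^ 3, H R l x
  set B := ∫ x : ℝ in -s ^ 3..s ^ 3, H R l (x + (s ^ 2 : ℝ) * Complex.I)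
  set D := ∫ y : ℝ in (0 : ℝ)..s ^ 2, H R l ((s ^ 3 : ℝ) + y * Complex.I)
  set E := ∫ y : ℝ in (0 : ℝ)..s ^ 2, H R l ((-s ^ 3 : ℝ) + y * Complex.I)
  have hA : A = B - Complex.I • D + Complex.I • E := by linear_combination key
  rw [hA]
  have hn : ∀ w : ℂ, ‖Complex.I • w‖ = ‖w‖ := fun w => by simp
  calc _ ≤ ‖B‖ + ‖D‖ + ‖E‖ := by
        refine (norm_add_le _ _).trans ?_
        rw [hn]
        gcongr
        refine (norm_sub_le _ _).trans ?_
        rw [hn]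
    _ ≤ 4 * (1 / (R - 1) + C) / s + (1 / (R - 1) + C) / s + (1 / (R - 1) + C) / s := by gcongr
    _ = _ := by ring

lemma tendsto_integral_H {R l : ℝ} (hR : 1 < R) (hl : 0 < l) :
    Tendsto (fun a : ℝ => ∫ x : ℝ in -a..a, H R l x) atTop (𝓝 0) := by
  have hr : Tendsto (fun a : ℝ => a ^ (1 / 3 : ℝ)) atTop atTop :=
    tendsto_rpow_atTop (by norm_num)
  have hlim : Tendsto (fun a : ℝ =>
      6 * (1 / (R - 1) + ‖G R (l * Complex.I)‖) / a ^ (1 / 3 : ℝ)) atTop (𝓝 0) :=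
    Tendsto.const_div_atTop hr _
  refine squeeze_zero_norm' ?_ hlim
  filter_upwards [hr.eventually_ge_atTop 1, hr.eventually_ge_atTop (2 * l),
    eventually_ge_atTop 0] with a h1 h2 h0
  have h3 : (a ^ (1 / 3 : ℝ)) ^ 3 = a := by
    rw [← Real.rpow_natCast, ← Real.rpow_mul h0]
    norm_num
  have := norm_integral_H_le hR hl h1 h2
  rwa [h3] at this

lemma G_I_mul (R l : ℝ) :
    G R (l * Complex.I) = ((l / (R * Real.exp l - 1) : ℝ) : ℂ) * Complex.I := by
  have : -Complex.I * (l * Complex.I) = (l : ℂ) := by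
    linear_combination -(l : ℂ) * Complex.I_mul_I
  rw [G, this]
  push_cast
  ring

lemma im_H_ofReal {μ R l : ℝ} (hμ : 1 < μ) (hR : 1 < R) (hRμ : R ^ 2 + 1 = 2 * μ * R)
    (hl : 0 < l) (x : ℝ) :
    (H R l x).im = (1 / 2) * (x * Real.sin x / ((μ - Real.cos x) * (l ^ 2 + x ^ 2))) -
      (1 / (R * Real.exp l - 1)) * (l / (l ^ 2 + x ^ 2)) := by
  have hne : (x : ℂ) ≠ l * Complex.I := by
    intro h
    have := congrArg Complex.im h
    simp at this
    linarith
  have hq : ((x : ℂ) - l * Complex.I) * (x + l * Complex.I) = ((l ^ 2 + x ^ 2 : ℝ) : ℂ) := by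
    push_cast
    linear_combination -(l : ℂ) ^ 2 * Complex.I_sq
  have hcos : 0 < μ - Real.cos x := by linarith [Real.cos_le_one x]
  have hG : (G R x).im = x * Real.sin x / (2 * (μ - Real.cos x)) := by
    have he : (R : ℂ) * Complex.exp (-Complex.I * x) - 1 =
        ⟨R * Real.cos x - 1, -(R * Real.sin x)⟩ := by
      have : -Complex.I * x = ((-x : ℝ) : ℂ) * Complex.I := by push_cast; ring
      rw [this]
      apply Complex.ext
      · rw [Complex.sub_re, Complex.re_ofReal_mul, Complex.exp_ofReal_mul_I_re, Real.cos_neg,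
          Complex.one_re]
      · rw [Complex.sub_im, Complex.im_ofReal_mul, Complex.exp_ofReal_mul_I_im, Real.sin_neg,
          Complex.one_im, sub_zero, mul_neg]
    have hn : (R * Real.cos x - 1) * (R * Real.cos x - 1) +
        -(R * Real.sin x) * -(R * Real.sin x) = R * (2 * (μ - Real.cos x)) := by
      linear_combination R ^ 2 * Real.sin_sq_add_cos_sq x + hRμ
    rw [G, he, Complex.div_im, Complex.normSq_mk, hn]
    simp only [Complex.ofReal_re, Complex.ofReal_im]
    have : R ≠ 0 := by linarith
    field_simp
    ring
  rw [H, dslope_of_ne _ hne, slope_def_field, div_div, hq, Complex.div_ofReal_im, Complex.sub_im,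
    hG, G_I_mul]
  simp only [Complex.mul_im, Complex.ofReal_re, Complex.ofReal_im, Complex.I_re, Complex.I_im]
  have : 0 < l ^ 2 + x ^ 2 := by positivity
  field_simp
  ring

theorem stmt16 (μ l : ℝ) (hμ : 1 < μ) (hl : 0 < l) :
    Tendsto (fun a : ℝ => ∫ θ in (0:ℝ)..a,
        θ * Real.sin θ / ((μ - Real.cos θ) * (l ^ 2 + θ ^ 2))) atTop
      (𝓝 (Real.pi / (Real.exp l * (μ + Real.sqrt (μ ^ 2 - 1)) - 1))) := by
  set R := μ + Real.sqrt (μ ^ 2 - 1) with hRdef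
  have hsq : Real.sqrt (μ ^ 2 - 1) ^ 2 = μ ^ 2 - 1 := Real.sq_sqrt (by nlinarith)
  have hR : 1 < R := by linarith [Real.sqrt_nonneg (μ ^ 2 - 1)]
  have hRμ : R ^ 2 + 1 = 2 * μ * R := by
    rw [hRdef]
    linear_combination hsq
  set f : ℝ → ℝ := fun θ => θ * Real.sin θ / ((μ - Real.cos θ) * (l ^ 2 + θ ^ 2)) with hf
  have hfc : Continuous f := by
    refine Continuous.div (by fun_prop) (by fun_prop) fun x => ?_
    have : 0 < μ - Real.cos x := by linarith [Real.cos_le_one x]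
    positivity
  have hgc : Continuous fun x : ℝ => l / (l ^ 2 + x ^ 2) :=
    Continuous.div (by fun_prop) (by fun_prop) fun x => by positivity
  have hHc : Continuous fun x : ℝ => H R l x :=
    (differentiableOn_H hR hl).continuousOn.comp_continuous Complex.continuous_ofReal
      fun x => by simp
  set K := 1 / (R * Real.exp l - 1) with hK
  have heven : ∀ a : ℝ, ∫ x in -a..a, f x = 2 * ∫ x in (0 : ℝ)..a, f x := by
    intro a
    rw [← intervalIntegral.integral_add_adjacent_intervals (b := 0)
      (hfc.intervalIntegrable _ _) (hfc.intervalIntegrable _ _)]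
    have h := intervalIntegral.integral_comp_neg (a := 0) (b := a) f
    have hneg : ∀ x, f (-x) = f x := fun x => by simp [hf]
    simp only [hneg, neg_zero] at h
    rw [← h]
    ring
  have hmain : ∀ a : ℝ, ∫ x in (0 : ℝ)..a, f x =
      (∫ x : ℝ in -a..a, H R l x).im + K * (2 * Real.arctan (a / l)) := by
    intro a
    have h1 : (∫ x : ℝ in -a..a, H R l x).im = ∫ x : ℝ in -a..a, (H R l x).im :=
      (Complex.imCLM.intervalIntegral_comp_comm (hHc.intervalIntegrable _ _)).symm
    rw [h1]
    simp only [im_H_ofReal hμ hR hRμ hl]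
    rw [intervalIntegral.integral_sub ((hfc.const_mul _).intervalIntegrable _ _)
      ((hgc.const_mul _).intervalIntegrable _ _), intervalIntegral.integral_const_mul,
      intervalIntegral.integral_const_mul, integral_div_sq_add_sq, heven, neg_div,
      Real.arctan_neg]
    ring
  simp only [hmain]
  have h1 : Tendsto (fun a : ℝ => (∫ x : ℝ in -a..a, H R l x).im) atTop (𝓝 0) := by
    have := (Complex.continuous_im.tendsto _).comp (tendsto_integral_H hR hl)
    rwa [Complex.zero_im] at this
  have h2 : Tendsto (fun a : ℝ => Real.arctan (a / l)) atTop (𝓝 (Real.pi / 2)) :=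
    (Real.tendsto_arctan_atTop.mono_right nhdsWithin_le_nhds).comp
      (tendsto_id.atTop_div_const hl)
  have h3 := h1.add ((h2.const_mul 2).const_mul K)
  convert h3 using 2
  rw [hK, mul_comm R]
  ring
end

section
/- For every λ > 0, ∫₀^∞ ln(sin² t)/(λ² + t²) dt = (π/λ)·ln((1 − e^{−2λ})/2). -/
/-!
Cut the half-line into periods: the integral `T` is the sum over `n : ℕ` of the integrals of
`log (sin² t) / (l² + (t + nπ)²)` over `[0, π]` (`hasSum_cellIntegral`). By reflection the cells with
negative index contribute equally, so `2lT` is the integral over `[0, π]` of `log (sin² t)` against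
`∑_{k ∈ ℤ} l / (l² + (t + kπ)²)`. Comparing the Mittag-Leffler and geometric expansions of
`cot (t + il)` identifies this sum with the Poisson kernel `1 + 2 ∑_{n ≥ 1} e^{-2ln} cos (2nt)`
(`hasSum_kernel`). Integrating termwise (`hasSum_integral_kernel`), with
`∫₀^π log (sin t) = -π log 2` and the Fourier coefficients `∫₀^π log (sin t) cos (2nt) = -π / (2n)`
(`integral_log_sin_mul_cos`), gives
`2lT = -2π log 2 - 2π ∑_{n ≥ 1} e^{-2ln} / n = 2π (log (1 - e^{-2l}) - log 2)`.
-/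

open MeasureTheory Filter Topology

open Polynomial.Chebyshev in
/-- Since `U₂ₙ₊₁(cos t) = sin((2n+2)t) / sin t`, this is `∫₀^π cot t · sin((2n+2)t) dt = π`, with the
removable singularities at `0` and `π` filled in by the Chebyshev polynomial. -/
lemma integral_cos_mul_chebyshevU (n : ℕ) :
    ∫ t in (0:ℝ)..Real.pi, Real.cos t * (U ℝ (2 * n + 1)).eval (Real.cos t) = Real.pi := by
  induction n with
  | zero =>
    have h : ∀ t : ℝ, Real.cos t * (U ℝ (2 * (0:ℕ) + 1)).eval (Real.cos t)
        = 2 * Real.cos t ^ 2 := by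
      intro t; simp; ring
    simp_rw [h]
    rw [intervalIntegral.integral_const_mul, integral_cos_sq]
    simp; ring
  | succ n ih =>
    have hc : ∀ k : ℤ, k ≠ 0 → ∫ t in (0:ℝ)..Real.pi, Real.cos (k * t) = 0 := by
      intro k hk
      rw [intervalIntegral.integral_comp_mul_left (fun x => Real.cos x) (by exact_mod_cast hk)]
      simp [Real.sin_int_mul_pi]
    have h : ∀ t : ℝ, Real.cos t * (U ℝ (2 * (n + 1 : ℕ) + 1)).eval (Real.cos t)
        = Real.cos ((2 * n + 4 : ℤ) * t) + Real.cos ((2 * n + 2 : ℤ) * t)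
          + Real.cos t * (U ℝ (2 * n + 1)).eval (Real.cos t) := by
      intro t
      have e : (2 * (n + 1 : ℕ) + 1 : ℤ) = (2 * n + 1) + 2 := by push_cast; ring
      rw [e, U_eq_two_mul_T_add_U, Polynomial.eval_add, Polynomial.eval_mul, T_real_cos,
        Real.cos_add_cos]
      push_cast
      simp only [Polynomial.eval_ofNat]
      ring_nf
    simp_rw [h]
    rw [intervalIntegral.integral_add, intervalIntegral.integral_add, hc _ (by omega),
      hc _ (by omega), ih]
    · ring
    all_goals exact Continuous.intervalIntegrable (by fun_prop) _ _

open Polynomial.Chebyshev in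
/-- The Fourier coefficients of `log (sin t)` on `[0, π]`, by integrating the derivative of
`log (sin t) * sin((2n+2)t)`, a function that is continuous on `[0, π]` and vanishes at both ends. -/
lemma integral_log_sin_mul_cos (n : ℕ) :
    ∫ t in (0:ℝ)..Real.pi, Real.log (Real.sin t) * Real.cos (2 * (n + 1) * t)
      = -Real.pi / (2 * (n + 1)) := by
  have hU : ∀ t : ℝ, (U ℝ (2 * n + 1)).eval (Real.cos t) * Real.sin t
      = Real.sin (2 * (n + 1) * t) := by
    intro t
    rw [U_real_cos]; push_cast; ring_nf
  have hi1 : IntervalIntegrable (fun t => Real.cos t * (U ℝ (2 * n + 1)).eval (Real.cos t))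
      volume 0 Real.pi := Continuous.intervalIntegrable (by fun_prop) _ _
  have hi2 : IntervalIntegrable
      (fun t => 2 * (n + 1) * (Real.log (Real.sin t) * Real.cos (2 * (n + 1) * t)))
      volume 0 Real.pi :=
    ((intervalIntegrable_log_sin (a := 0) (b := Real.pi)).mul_continuousOn
      (by fun_prop)).const_mul _
  have key := intervalIntegral.integral_eq_sub_of_hasDerivAt_of_le (a := 0) (b := Real.pi)
    (f := fun t => Real.log (Real.sin t) * Real.sin (2 * (n + 1) * t))
    (f' := fun t => Real.cos t * (U ℝ (2 * n + 1)).eval (Real.cos t)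
      + 2 * (n + 1) * (Real.log (Real.sin t) * Real.cos (2 * (n + 1) * t)))
    Real.pi_pos.le ?_ ?_ (hi1.add hi2)
  · rw [intervalIntegral.integral_add hi1 hi2, integral_cos_mul_chebyshevU,
      intervalIntegral.integral_const_mul] at key
    simp at key
    have : (0:ℝ) < 2 * (n + 1) := by positivity
    rw [eq_div_iff this.ne']
    linarith
  · have : (fun t => Real.log (Real.sin t) * Real.sin (2 * (n + 1) * t))
        = fun t => (U ℝ (2 * n + 1)).eval (Real.cos t) * (Real.sin t * Real.log (Real.sin t)) := by
      ext t; rw [← hU]; ring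
    rw [this]
    have h1 : Continuous fun t => Real.sin t * Real.log (Real.sin t) :=
      Real.continuous_mul_log.comp Real.continuous_sin
    exact Continuous.continuousOn (by fun_prop)
  · intro t ht
    have hs := (Real.sin_pos_of_pos_of_lt_pi ht.1 ht.2).ne'
    have h1 := (Real.hasDerivAt_sin t).log hs
    have h2 := ((hasDerivAt_id t).const_mul (2 * (n + 1 : ℝ))).sin
    convert! h1.mul h2 using 1
    simp only [id]
    rw [← hU]
    field_simp

/-- The Cauchy kernel summed over `πℤ` equals the Poisson kernel `1 + 2 ∑ e^{-2ln} cos(2nt)`, the two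
series being combined into one and the `k = 0` term moved to the right. Both kernels equal
`-Im cot(t + il)`: the first by the
Mittag-Leffler expansion of the cotangent, the second by its geometric expansion in
`exp(2i(t + il))`. -/
lemma hasSum_kernel (l : ℝ) (hl : 0 < l) (t : ℝ) :
    HasSum (fun n : ℕ => l * ((l ^ 2 + (t - (n + 1) * Real.pi) ^ 2)⁻¹
        + (l ^ 2 + (t + (n + 1) * Real.pi) ^ 2)⁻¹)
        - 2 * (Real.exp (-2 * l) ^ (n + 1) * Real.cos (2 * (n + 1) * t)))
      (1 - l * (l ^ 2 + t ^ 2)⁻¹) := by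
  have hpi := Real.pi_pos
  set w : ℂ := t + l * Complex.I with hw
  set q : ℂ := Complex.exp (2 * Complex.I * w) with hq
  have hq' : q = Complex.exp (((-2 * l : ℝ) : ℂ) + ((2 * t : ℝ) : ℂ) * Complex.I) := by
    rw [hq, hw]; congr 1; push_cast; linear_combination 2 * l * Complex.I_sq
  have hqn : ‖q‖ < 1 := by
    rw [hq', Complex.norm_exp]
    simp [hl]
  have hz : 0 < (w / Real.pi).im := by
    rw [Complex.div_ofReal_im]; simp [hw]; positivity
  have hz' := UpperHalfPlane.coe_mem_integerComplement ⟨w / Real.pi, hz⟩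
  have hpc : (Real.pi : ℂ) ≠ 0 := by exact_mod_cast hpi.ne'
  have h1 := (summable_cotTerm hz').hasSum
  have h2 := cot_series_rep' hz'
  simp only [cotTerm] at h1
  rw [← h2] at h1
  have h3 := (Complex.hasSum_im h1).mul_left (-(1 / Real.pi))
  have h4 := (Complex.hasSum_re ((hasSum_geometric_of_norm_lt_one hqn).mul_left q)).mul_left 2
  have him : ∀ x : ℝ, (1 / ((w / Real.pi : ℂ) + x)).im
      = -Real.pi * (l * (l ^ 2 + (t + x * Real.pi) ^ 2)⁻¹) := by
    intro x
    have : (1 / ((w / Real.pi : ℂ) + x)) = Real.pi * (w + (x * Real.pi : ℝ))⁻¹ := by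
      rw [div_add' _ _ _ hpc, one_div_div, div_eq_mul_inv]; push_cast; rfl
    rw [this, Complex.im_ofReal_mul, Complex.inv_im]
    simp [hw, Complex.normSq_apply]
    ring
  convert! h3.sub h4 using 1
  · ext n
    have hA := him (n + 1)
    have hB := him (-(n + 1))
    push_cast at hA hB
    rw [Complex.add_im, hA, sub_eq_add_neg (w / Real.pi : ℂ), hB]
    have : q * q ^ n = Complex.exp (((n + 1) * (-2 * l) : ℝ) + ((2 * (n + 1) * t : ℝ) : ℂ) * Complex.I) := by
      rw [← pow_succ', hq', ← Complex.exp_nat_mul]; congr 1; push_cast; ring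
    rw [this, Complex.exp_re, ← Real.exp_nat_mul]
    simp
    field_simp
    ring
  · have hA := him 0
    simp at hA
    rw [Complex.sub_im]
    have : (Real.pi * Complex.cot (Real.pi * (w / Real.pi))) = -Real.pi * Complex.I * (1 + 2 * (q * (1 - q)⁻¹)) := by
      have hq1 : 1 - q ≠ 0 := by
        intro h
        rw [← sub_eq_zero.1 h] at hqn
        simp at hqn
      rw [mul_div_cancel₀ _ hpc, Complex.cot_eq_exp_ratio, ← hq]
      field_simp
      rw [Complex.I_sq]; ring
    rw [this]
    simp [-Complex.inv_im, -Complex.inv_re, hA]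
    field_simp
    ring

/-- The bound is uniform in `x`; the shift to `n + 1` on the right makes it valid for `n = 0`. -/
lemma inv_add_sq_le (l : ℝ) (hl : 0 < l) (n : ℕ) (x : ℝ) (hx : n * Real.pi ≤ |x|) :
    (l ^ 2 + x ^ 2)⁻¹ ≤ 2 * (1 + (l ^ 2)⁻¹) * (((n + 1 : ℕ) : ℝ) ^ 2)⁻¹ := by
  have h1 : (n : ℝ) ≤ |x| := by nlinarith [Real.pi_gt_three, (n.cast_nonneg : (0:ℝ) ≤ n)]
  have h2 : (n : ℝ) ^ 2 ≤ x ^ 2 := by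
    rw [← sq_abs x]; gcongr
  have hl2 : 0 < l ^ 2 := by positivity
  have h3 : 2 * (1 + (l ^ 2)⁻¹) * (l ^ 2 + x ^ 2)
      = 2 * (l ^ 2 + x ^ 2) + 2 + 2 * (l ^ 2)⁻¹ * x ^ 2 := by
    field_simp
    ring
  have h4 : 0 ≤ 2 * (l ^ 2)⁻¹ * x ^ 2 := by positivity
  rw [inv_le_iff_one_le_mul₀ (by positivity), mul_right_comm, ← div_eq_mul_inv,
    one_le_div (by positivity), h3]
  push_cast
  nlinarith [sq_nonneg ((n:ℝ) - 1)]

lemma summable_inv_sq : Summable (fun n : ℕ => (((n + 1 : ℕ) : ℝ) ^ 2)⁻¹) :=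
  (summable_nat_add_iff 1).2 (Real.summable_nat_pow_inv.2 one_lt_two)

lemma log_sin_sq (t : ℝ) : Real.log (Real.sin t ^ 2) = 2 * Real.log (Real.sin t) := by
  simp

lemma intervalIntegrable_log_sin_sq (a b : ℝ) :
    IntervalIntegrable (fun t => Real.log (Real.sin t ^ 2)) volume a b := by
  simp_rw [log_sin_sq]
  exact (intervalIntegrable_log_sin (a := a) (b := b)).const_mul 2

lemma log_sin_sq_nonpos (t : ℝ) : Real.log (Real.sin t ^ 2) ≤ 0 :=
  Real.log_nonpos (sq_nonneg _) (Real.sin_sq_le_one t)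

lemma log_sin_sq_add_pi (t : ℝ) (n : ℕ) :
    Real.log (Real.sin (t + n * Real.pi) ^ 2) = Real.log (Real.sin t ^ 2) := by
  rw [Real.sin_add_nat_mul_pi, mul_pow, ← pow_mul, mul_comm n 2, pow_mul]; simp

/-- The contribution of the period `[nπ, (n+1)π]` to the half-line integral, translated to `[0, π]`
by the `π`-periodicity of `sin²`. -/
noncomputable def cellIntegral (l : ℝ) (n : ℕ) : ℝ :=
  ∫ t in (0:ℝ)..Real.pi, Real.log (Real.sin t ^ 2) * (l ^ 2 + (t + n * Real.pi) ^ 2)⁻¹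

lemma continuous_kernel (l : ℝ) (hl : 0 < l) (a : ℝ) :
    Continuous (fun t : ℝ => (l ^ 2 + (t + a) ^ 2)⁻¹) :=
  Continuous.inv₀ (by fun_prop) (fun t => by positivity)

lemma intervalIntegrable_mul_kernel (l : ℝ) (hl : 0 < l) (a u v : ℝ) :
    IntervalIntegrable (fun t => Real.log (Real.sin t ^ 2) * (l ^ 2 + (t + a) ^ 2)⁻¹)
      volume u v :=
  (intervalIntegrable_log_sin_sq u v).mul_continuousOn (continuous_kernel l hl a).continuousOn

/-- The substitution `t ↦ π - t` sends the cell of the real line with index `-(n+1)` to the cell with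
index `n`. -/
lemma integral_reflected_cell (l : ℝ) (n : ℕ) :
    ∫ t in (0:ℝ)..Real.pi, Real.log (Real.sin t ^ 2) * (l ^ 2 + (t - (n + 1) * Real.pi) ^ 2)⁻¹
      = cellIntegral l n := by
  have := intervalIntegral.integral_comp_sub_left (a := 0) (b := Real.pi)
    (fun t => Real.log (Real.sin t ^ 2) * (l ^ 2 + (t + n * Real.pi) ^ 2)⁻¹) Real.pi
  rw [sub_self, sub_zero] at this
  rw [cellIntegral, ← this]
  congr 1; ext t
  rw [Real.sin_pi_sub]
  ring_nf

lemma summable_cellIntegral (l : ℝ) (hl : 0 < l) : Summable (cellIntegral l) := by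
  have hC : Summable (fun n : ℕ => (2 * (1 + (l ^ 2)⁻¹) * (((n + 1 : ℕ) : ℝ) ^ 2)⁻¹)
      * ∫ t in (0:ℝ)..Real.pi, |Real.log (Real.sin t ^ 2)|) :=
    (summable_inv_sq.mul_left _).mul_right _
  refine hC.of_norm_bounded (fun n => ?_)
  rw [← intervalIntegral.integral_const_mul]
  refine intervalIntegral.norm_integral_le_of_norm_le Real.pi_pos.le
    (Eventually.of_forall fun t ht => ?_) ((intervalIntegrable_log_sin_sq 0 Real.pi).norm.const_mul _)
  rw [norm_mul, mul_comm, Real.norm_eq_abs (Real.log _)]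
  gcongr
  rw [Real.norm_of_nonneg (by positivity)]
  refine inv_add_sq_le l hl n _ ?_
  rw [abs_of_nonneg (add_nonneg ht.1.le (by positivity))]
  linarith [ht.1]

lemma hasSum_cellIntegral (l : ℝ) (hl : 0 < l) :
    HasSum (cellIntegral l)
      (∫ t in Set.Ici (0:ℝ), Real.log (Real.sin t ^ 2) / (l ^ 2 + t ^ 2)) := by
  set f : ℝ → ℝ := fun t => Real.log (Real.sin t ^ 2) / (l ^ 2 + t ^ 2) with hf
  set e : ℕ → ℝ := fun n => n * Real.pi with he
  have hmono : Monotone e := fun a b h => by simp only [he]; gcongr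
  have hU : (⋃ n : ℕ, Set.Ico (e n) (e (Order.succ n))) = Set.Ici 0 := by
    have := iUnion_Ico_map_succ_eq_Ici (f := e) (fun a => hmono bot_le) ?_
    · simpa [he] using this
    · refine Filter.not_bddAbove_of_tendsto_atTop (l := atTop)
        (tendsto_atTop_atTop_of_monotone hmono fun b => ?_)
      obtain ⟨n, hn⟩ := exists_nat_ge b
      exact ⟨n, by simp only [he]; nlinarith [Real.pi_gt_three, (n.cast_nonneg : (0:ℝ) ≤ n)]⟩
  have hle : ∀ n, e n ≤ e (Order.succ n) := fun n => hmono (Order.le_succ n)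
  have hcell : ∀ n, ∫ t in Set.Ico (e n) (e (Order.succ n)), f t = cellIntegral l n := by
    intro n
    rw [integral_Ico_eq_integral_Ioc, ← intervalIntegral.integral_of_le (hle n), cellIntegral]
    have := intervalIntegral.integral_comp_add_right (a := 0) (b := Real.pi) f (n * Real.pi)
    simp only [hf, log_sin_sq_add_pi, div_eq_mul_inv] at this
    rw [this]
    simp only [hf, he, div_eq_mul_inv]
    congr 1
    · simp
    · simp; ring
  have hint : ∀ n, IntegrableOn f (Set.Ico (e n) (e (Order.succ n))) := by
    intro n
    rw [integrableOn_Ico_iff_integrableOn_Ioo, ← integrableOn_Ioc_iff_integrableOn_Ioo,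
      ← intervalIntegrable_iff_integrableOn_Ioc_of_le (hle n)]
    simpa [hf, div_eq_mul_inv] using intervalIntegrable_mul_kernel l hl 0 (e n) (e (Order.succ n))
  have hfn : ∀ t, ‖f t‖ = - f t := fun t => by
    rw [Real.norm_of_nonpos (div_nonpos_of_nonpos_of_nonneg (log_sin_sq_nonpos t) (by positivity))]
  have hI : IntegrableOn f (⋃ n : ℕ, Set.Ico (e n) (e (Order.succ n))) := by
    refine integrableOn_iUnion_of_summable_integral_norm hint ?_
    -- The integrand has constant sign, so the integrals of the norms are the `-cellIntegral l n`.
    simp_rw [hfn, integral_neg, hcell]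
    exact (summable_cellIntegral l hl).neg
  have := hasSum_integral_iUnion (fun n => measurableSet_Ico) hmono.pairwise_disjoint_on_Ico_succ hI
  simp_rw [hcell, hU] at this
  exact this

/-- `hasSum_kernel` integrated termwise over `[0, π]` against `log (sin² t)`. -/
lemma hasSum_integral_kernel (l : ℝ) (hl : 0 < l) :
    HasSum (fun n : ℕ => l * (cellIntegral l n + cellIntegral l (n + 1))
        + 2 * Real.pi * (Real.exp (-2 * l) ^ (n + 1) / (n + 1)))
      (-2 * Real.pi * Real.log 2 - l * cellIntegral l 0) := by
  set r := Real.exp (-2 * l) with hr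
  have hr0 : 0 < r := Real.exp_pos _
  have hr1 : r < 1 := by rw [hr]; simp [hl]
  set b : ℕ → ℝ := fun n => l * (2 * (1 + (l ^ 2)⁻¹) * (((n + 1 : ℕ) : ℝ) ^ 2)⁻¹
    + 2 * (1 + (l ^ 2)⁻¹) * (((n + 1 : ℕ) : ℝ) ^ 2)⁻¹) + 2 * r ^ (n + 1) with hb
  have hbs : Summable b := by
    refine Summable.add (((summable_inv_sq.mul_left _).add (summable_inv_sq.mul_left _)).mul_left _)
      (((summable_nat_add_iff 1).2 (summable_geometric_of_lt_one hr0.le hr1)).mul_left 2)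
  have hL := intervalIntegrable_log_sin_sq 0 Real.pi
  have hc1 : ∀ n : ℕ, Continuous fun t : ℝ => (l ^ 2 + (t - (n + 1) * Real.pi) ^ 2)⁻¹ := fun n =>
    continuous_kernel l hl (-((n + 1) * Real.pi))
  have hc2 : ∀ n : ℕ, Continuous fun t : ℝ => (l ^ 2 + (t + (n + 1) * Real.pi) ^ 2)⁻¹ := fun n =>
    continuous_kernel l hl ((n + 1) * Real.pi)
  have hc0 : Continuous fun t : ℝ => (l ^ 2 + t ^ 2)⁻¹ := by
    simpa using continuous_kernel l hl 0
  have main := intervalIntegral.hasSum_integral_of_dominated_convergence (μ := volume)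
    (a := 0) (b := Real.pi)
    (F := fun (n : ℕ) t => Real.log (Real.sin t ^ 2) *
      (l * ((l ^ 2 + (t - (n + 1) * Real.pi) ^ 2)⁻¹ + (l ^ 2 + (t + (n + 1) * Real.pi) ^ 2)⁻¹)
        - 2 * (r ^ (n + 1) * Real.cos (2 * (n + 1) * t))))
    (f := fun t => Real.log (Real.sin t ^ 2) * (1 - l * (l ^ 2 + t ^ 2)⁻¹))
    (fun n t => b n * |Real.log (Real.sin t ^ 2)|) ?_ ?_ ?_ ?_ ?_
  · convert! main using 1
    · ext n
      have i1 := (hL.mul_continuousOn (hc1 n).continuousOn).const_mul l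
      have i2 := (hL.mul_continuousOn (hc2 n).continuousOn).const_mul l
      have i3 : IntervalIntegrable (fun t => 4 * r ^ (n + 1) *
          (Real.log (Real.sin t) * Real.cos (2 * (n + 1) * t))) volume 0 Real.pi := ((intervalIntegrable_log_sin (a := 0) (b := Real.pi)).mul_continuousOn
        (g := fun t => Real.cos (2 * (n + 1) * t)) (by fun_prop)).const_mul (4 * r ^ (n + 1))
      have : ∀ t, Real.log (Real.sin t ^ 2) *
          (l * ((l ^ 2 + (t - (n + 1) * Real.pi) ^ 2)⁻¹ + (l ^ 2 + (t + (n + 1) * Real.pi) ^ 2)⁻¹)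
            - 2 * (r ^ (n + 1) * Real.cos (2 * (n + 1) * t)))
          = l * (Real.log (Real.sin t ^ 2) * (l ^ 2 + (t - (n + 1) * Real.pi) ^ 2)⁻¹)
            + l * (Real.log (Real.sin t ^ 2) * (l ^ 2 + (t + (n + 1) * Real.pi) ^ 2)⁻¹)
            - 4 * r ^ (n + 1) * (Real.log (Real.sin t) * Real.cos (2 * (n + 1) * t)) := by
        intro t; rw [log_sin_sq]; ring
      simp_rw [this]
      have h2 : ∫ t in (0:ℝ)..Real.pi, Real.log (Real.sin t ^ 2)
          * (l ^ 2 + (t + (n + 1) * Real.pi) ^ 2)⁻¹ = cellIntegral l (n + 1) := by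
        simp [cellIntegral]
      rw [intervalIntegral.integral_sub (i1.add i2) i3, intervalIntegral.integral_add i1 i2,
        intervalIntegral.integral_const_mul, intervalIntegral.integral_const_mul,
        intervalIntegral.integral_const_mul, integral_log_sin_mul_cos, integral_reflected_cell, h2]
      field_simp
      ring
    · have i0 := (hL.mul_continuousOn hc0.continuousOn).const_mul l
      have : ∀ t, Real.log (Real.sin t ^ 2) * (1 - l * (l ^ 2 + t ^ 2)⁻¹)
          = Real.log (Real.sin t ^ 2) - l * (Real.log (Real.sin t ^ 2) * (l ^ 2 + t ^ 2)⁻¹) := by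
        intro t; ring
      simp_rw [this]
      rw [intervalIntegral.integral_sub hL i0, intervalIntegral.integral_const_mul]
      simp_rw [log_sin_sq]
      rw [intervalIntegral.integral_const_mul, integral_log_sin_zero_pi]
      simp [cellIntegral]
      ring
  · intro n
    refine AEStronglyMeasurable.mul hL.def'.aestronglyMeasurable ?_
    exact (((hc1 n).add (hc2 n)).const_mul l |>.sub (by fun_prop)).aestronglyMeasurable
  · refine fun n => Eventually.of_forall fun t ht => ?_
    rw [Set.uIoc_of_le Real.pi_pos.le] at ht
    rw [norm_mul, mul_comm, Real.norm_eq_abs (Real.log _)]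
    gcongr
    have hn : (0:ℝ) ≤ n * Real.pi := by positivity
    have b1 := inv_add_sq_le l hl n (t - (n + 1) * Real.pi) (by
      rw [abs_of_nonpos (by linarith [ht.2])]; linarith [ht.2])
    have b2 := inv_add_sq_le l hl n (t + (n + 1) * Real.pi) (by
      rw [abs_of_nonneg (by linarith [ht.1, Real.pi_pos])]; linarith [ht.1, Real.pi_pos])
    refine (norm_sub_le _ _).trans (add_le_add ?_ ?_)
    · rw [Real.norm_of_nonneg (by positivity)]
      gcongr
    · rw [norm_mul, norm_mul, Real.norm_of_nonneg (by positivity : (0:ℝ) ≤ r ^ (n + 1))]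
      simp only [Real.norm_ofNat]
      gcongr
      exact mul_le_of_le_one_right (by positivity) (Real.abs_cos_le_one _)
  · exact Eventually.of_forall fun t _ => hbs.mul_right _
  · simp_rw [tsum_mul_right]
    exact hL.norm.const_mul _
  · exact Eventually.of_forall fun t _ => (hasSum_kernel l hl t).mul_left _

theorem stmt17 (l : ℝ) (hl : 0 < l) :
    (∫ t in Set.Ici (0:ℝ), Real.log (Real.sin t ^ 2) / (l ^ 2 + t ^ 2))
      = Real.pi / l * Real.log ((1 - Real.exp (-2 * l)) / 2) := by
  have hr1 : Real.exp (-2 * l) < 1 := by simp [hl]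
  have h := hasSum_cellIntegral l hl
  set T := ∫ t in Set.Ici (0:ℝ), Real.log (Real.sin t ^ 2) / (l ^ 2 + t ^ 2)
  have h' : HasSum (fun n => cellIntegral l (n + 1)) (T - cellIntegral l 0) := by
    rw [hasSum_nat_add_iff 1]; simpa using h
  have hlog := Real.hasSum_pow_div_log_of_abs_lt_one
    (x := Real.exp (-2 * l)) (by rwa [abs_of_pos (Real.exp_pos _)])
  have key := (hasSum_integral_kernel l hl).unique
    (((h.add h').mul_left l).add (hlog.mul_left (2 * Real.pi)))
  rw [Real.log_div (by linarith) two_ne_zero, div_mul_eq_mul_div, eq_div_iff hl.ne']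
  linear_combination -key / 2
end

section
/- Let a > 0, let t₁, …, t_n be real numbers in the interval (0, a), and let λ > 0. For θ ∈ ℝ and 1 ≤ k ≤ n set φ_k(θ) = arctan(t_k sin θ / (a − t_k cos θ)) and ρ_k(θ) = √(a² − 2 a t_k cos θ + t_k²). Then ∫₀^∞ [cos(φ₁(θ) + ⋯ + φ_n(θ)) / (ρ₁(θ)⋯ρ_n(θ))]·dθ/(λ² + θ²) = (π/(2λ))·∏_{k=1}^n 1/(a − t_k e^{−λ}). -/
/-!
Write `F w = ∏ 1 / (a - t k * w)`. In polar form `1 / (a - t k * e^{iθ}) = e^{i φ_k(θ)} / ρ_k(θ)`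
(`inv_sub_exp`), so the integrand is the real part of `F (e^{iθ}) / (l ^ 2 + θ ^ 2)` (`re_prod`).
Since `t k < a`, `F w = ∑ c m * w ^ m` on the closed unit disc with `∑ ‖c m‖ < ∞`
(`exists_series`), and the series may be integrated term by term against the integrable kernel
`1 / (l ^ 2 + θ ^ 2)`. Each term is given by
`∫ e^{imθ} / (l ^ 2 + θ ^ 2) dθ = (π / l) * e^{-lm}` (`integral_kernel`), which is Fourier
inversion for `x ↦ e^{-l|x|}`. Summing back, the integral over `ℝ` is `(π / l) * F (e^{-l})`, which
is real; the integrand is even, so the integral over the half-line is half of that.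
-/

open MeasureTheory Filter Topology

/-- Polar form of `1 / (a - t e^{iθ})`. The arctangent is the argument because
`0 < a - t cos θ`. -/
lemma inv_sub_exp (a t θ : ℝ) (ht : t ∈ Set.Ioo 0 a) :
    (1 : ℂ) / (a - t * Complex.exp (θ * Complex.I)) =
      Complex.exp (Real.arctan (t * Real.sin θ / (a - t * Real.cos θ)) * Complex.I)
        / Real.sqrt (a ^ 2 - 2 * a * t * Real.cos θ + t ^ 2) := by
  obtain ⟨h0, h1⟩ := ht
  have hx : 0 < a - t * Real.cos θ := by nlinarith [Real.cos_le_one θ]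
  set x := a - t * Real.cos θ with hxdef
  set y := t * Real.sin θ with hydef
  have hr : a ^ 2 - 2 * a * t * Real.cos θ + t ^ 2 = x ^ 2 + y ^ 2 := by
    rw [hxdef, hydef]; linear_combination (-t ^ 2) * Real.sin_sq_add_cos_sq θ
  have hpos : 0 < x ^ 2 + y ^ 2 := by positivity
  have hs : √(1 + (y / x) ^ 2) = √(x ^ 2 + y ^ 2) / x := by
    rw [show 1 + (y / x) ^ 2 = (x ^ 2 + y ^ 2) / x ^ 2 by field_simp,
      Real.sqrt_div hpos.le, Real.sqrt_sq hx.le]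
  have hz : (a : ℂ) - t * Complex.exp (θ * Complex.I) = x - y * Complex.I := by
    rw [Complex.exp_mul_I, hxdef, hydef]; push_cast; ring
  have hz0 : (x : ℂ) - y * Complex.I ≠ 0 := by
    intro h
    have := congrArg Complex.re h
    simp at this
    exact hx.ne' this
  have hR : 0 < √(x ^ 2 + y ^ 2) := Real.sqrt_pos.2 hpos
  have hR2 : ((√(x ^ 2 + y ^ 2) : ℝ) : ℂ) ^ 2 = (x : ℂ) ^ 2 + (y : ℂ) ^ 2 := by
    exact_mod_cast Real.sq_sqrt hpos.le
  rw [hr, hz, Complex.exp_mul_I, ← Complex.ofReal_cos, ← Complex.ofReal_sin, Real.cos_arctan,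
    Real.sin_arctan, hs]
  have hx' : (x : ℂ) ≠ 0 := by exact_mod_cast hx.ne'
  have hR' : ((√(x ^ 2 + y ^ 2) : ℝ) : ℂ) ≠ 0 := by exact_mod_cast hR.ne'
  push_cast
  field_simp
  rw [hR2]
  linear_combination (y : ℂ) ^ 2 * Complex.I_sq

lemma re_prod (a θ : ℝ) {n : ℕ} (t : Fin n → ℝ) (ht : ∀ k, t k ∈ Set.Ioo 0 a) :
    (∏ k, (1 : ℂ) / (a - t k * Complex.exp (θ * Complex.I))).re =
      Real.cos (∑ k, Real.arctan (t k * Real.sin θ / (a - t k * Real.cos θ)))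
        / ∏ k, Real.sqrt (a ^ 2 - 2 * a * t k * Real.cos θ + t k ^ 2) := by
  rw [Finset.prod_congr rfl fun k _ => inv_sub_exp a (t k) θ (ht k), Finset.prod_div_distrib,
    ← Complex.exp_sum, ← Finset.sum_mul, ← Complex.ofReal_sum, ← Complex.ofReal_prod,
    Complex.div_ofReal_re, Complex.exp_ofReal_mul_I_re]

/-- The geometric series `1 / (a - t w) = ∑ a⁻¹ (t / a) ^ m w ^ m` converges absolutely on the
closed unit disc. -/
lemma exists_series_factor (a t : ℝ) (ht : t ∈ Set.Ioo 0 a) :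
    ∃ d : ℕ → ℂ, Summable (fun m => ‖d m‖) ∧
      ∀ w : ℂ, ‖w‖ ≤ 1 → ∑' m, d m * w ^ m = (1 : ℂ) / (a - t * w) := by
  obtain ⟨h0, h1⟩ := ht
  have ha : 0 < a := h0.trans h1
  have ha' : (a : ℂ) ≠ 0 := by exact_mod_cast ha.ne'
  have hr : ‖((t / a : ℝ) : ℂ)‖ < 1 := by
    rw [Complex.norm_real, Real.norm_of_nonneg (by positivity), div_lt_one ha]; exact h1
  refine ⟨fun m => (a : ℂ)⁻¹ * ((t / a : ℝ) : ℂ) ^ m, ?_, fun w hw1 => ?_⟩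
  · simp_rw [norm_mul, norm_pow]
    exact (summable_geometric_of_lt_one (norm_nonneg _) hr).mul_left _
  · simp_rw [mul_assoc, ← mul_pow]
    have hlt : ‖((t / a : ℝ) : ℂ) * w‖ < 1 := by
      rw [norm_mul]
      exact (mul_le_of_le_one_right (norm_nonneg _) hw1).trans_lt hr
    rw [tsum_mul_left, tsum_geometric_of_norm_lt_one hlt, ← mul_inv, one_div]
    congr 1
    push_cast
    field_simp

/-- The product of the factors `1 / (a - t k * w)` is the sum of a power series whose coefficients
are absolutely summable; the coefficients come from iterated Cauchy products. -/
lemma exists_series (a : ℝ) {n : ℕ} (t : Fin n → ℝ) (ht : ∀ k, t k ∈ Set.Ioo 0 a) :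
    ∃ c : ℕ → ℂ, Summable (fun m => ‖c m‖) ∧
      ∀ w : ℂ, ‖w‖ ≤ 1 → ∑' m, c m * w ^ m = ∏ k, (1 : ℂ) / (a - t k * w) := by
  induction n with
  | zero =>
    refine ⟨fun m => if m = 0 then 1 else 0, ?_, fun w _ => ?_⟩
    · exact summable_of_ne_finset_zero (s := {0}) fun m hm => by
        simp only [Finset.mem_singleton] at hm; simp [hm]
    · rw [tsum_eq_single 0 fun m hm => by simp [hm]]; simp
  | succ n ih =>
    obtain ⟨c, hc, hw⟩ := ih (fun k => t k.succ) fun k => ht k.succ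
    obtain ⟨d, hd, hgeo⟩ := exists_series_factor a (t 0) (ht 0)
    refine ⟨_, summable_norm_sum_mul_antidiagonal_of_summable_norm hd hc, fun w hw1 => ?_⟩
    have hbd : ∀ {d : ℕ → ℂ}, Summable (fun m => ‖d m‖) → Summable fun m => ‖d m * w ^ m‖ := by
      intro d hd
      refine hd.of_nonneg_of_le (fun _ => norm_nonneg _) fun m => ?_
      rw [norm_mul, norm_pow]
      exact mul_le_of_le_one_right (norm_nonneg _) (pow_le_one₀ (norm_nonneg _) hw1)
    rw [Fin.prod_univ_succ, ← hw w hw1, ← hgeo w hw1,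
      tsum_mul_tsum_eq_tsum_sum_antidiagonal_of_summable_norm (hbd hd) (hbd hc)]
    refine tsum_congr fun m => ?_
    rw [Finset.sum_mul]
    refine Finset.sum_congr rfl fun p hp => ?_
    rw [← Finset.HasAntidiagonal.mem_antidiagonal.1 hp, pow_add]; ring

lemma integrable_kernel {l : ℝ} (hl : 0 < l) :
    Integrable fun θ : ℝ => (1 : ℝ) / (l ^ 2 + θ ^ 2) := by
  have := (integrable_inv_one_add_sq.comp_div hl.ne').const_mul (l ^ 2)⁻¹
  refine this.congr (ae_of_all _ fun θ => ?_)
  field_simp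

open scoped FourierTransform in
/-- The Fourier transform of `x ↦ e^{-l|x|}`, with Mathlib's normalization `e^{-2πixw}`. -/
lemma fourier_exp_abs {l : ℝ} (hl : 0 < l) (w : ℝ) :
    𝓕 (fun x : ℝ => Complex.exp (-(l * |x| : ℝ))) w =
      (2 * l * (1 / (l ^ 2 + (w * (2 * Real.pi)) ^ 2)) : ℝ) := by
  rw [Real.fourier_real_eq_integral_exp_smul]
  set z : ℂ := (2 * Real.pi * w : ℝ) * Complex.I with hz
  have e1 : ∀ x ∈ Set.Ioi (0:ℝ), Complex.exp (↑(-2 * Real.pi * x * w) * Complex.I) •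
      Complex.exp (-(l * |x| : ℝ)) = Complex.exp ((-l - z) * x) := fun x hx => by
    rw [abs_of_pos hx, smul_eq_mul, ← Complex.exp_add, hz]; push_cast; ring_nf
  have e2 : ∀ x ∈ Set.Iic (0:ℝ), Complex.exp (↑(-2 * Real.pi * x * w) * Complex.I) •
      Complex.exp (-(l * |x| : ℝ)) = Complex.exp ((l - z) * x) := fun x hx => by
    rw [abs_of_nonpos hx, smul_eq_mul, ← Complex.exp_add, hz]; push_cast; ring_nf
  have r1 : (-l - z).re < 0 := by simp [hz, hl]
  have r2 : 0 < (l - z).re := by simp [hz, hl]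
  have i1 := (integrableOn_exp_mul_complex_Ioi r1 0).congr_fun (fun x hx => (e1 x hx).symm)
    measurableSet_Ioi
  have i2 := (integrableOn_exp_mul_complex_Iic r2 0).congr_fun (fun x hx => (e2 x hx).symm)
    measurableSet_Iic
  rw [← intervalIntegral.integral_Iic_add_Ioi i2 i1,
    setIntegral_congr_fun measurableSet_Iic e2, setIntegral_congr_fun measurableSet_Ioi e1,
    integral_exp_mul_complex_Ioi r1, integral_exp_mul_complex_Iic r2]
  have n1 : -l - z ≠ 0 := fun h => by rw [h] at r1; simp at r1
  have n2 : l - z ≠ 0 := fun h => by rw [h] at r2; simp at r2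
  have n3 : (l : ℂ) ^ 2 + (w * (2 * Real.pi)) ^ 2 ≠ 0 := by
    have : 0 < l ^ 2 + (w * (2 * Real.pi)) ^ 2 := by positivity
    exact_mod_cast this.ne'
  have h3 : (l : ℂ) ^ 2 + (w * (2 * Real.pi)) ^ 2 = -((-l - z) * (l - z)) := by
    rw [hz]; push_cast; linear_combination (2 * Real.pi * w : ℂ) ^ 2 * Complex.I_sq
  push_cast
  rw [h3]
  simp
  field_simp
  ring

open scoped FourierTransform in
/-- The characteristic function of the (unnormalized) Cauchy density at a natural number,
obtained from `fourier_exp_abs` by Fourier inversion and the substitution `θ = 2πv`. -/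
lemma integral_kernel {l : ℝ} (hl : 0 < l) (m : ℕ) :
    ∫ θ : ℝ, Complex.exp (θ * Complex.I) ^ m * ((1 / (l ^ 2 + θ ^ 2) : ℝ) : ℂ) =
      (Real.pi / l : ℝ) * Complex.exp (-l) ^ m := by
  set f : ℝ → ℂ := fun x => Complex.exp (-(l * |x| : ℝ)) with hf
  have hF : 𝓕 f = fun w => ((2 * l * (1 / (l ^ 2 + (w * (2 * Real.pi)) ^ 2)) : ℝ) : ℂ) :=
    funext (fourier_exp_abs hl)
  have hc : Continuous f := by fun_prop
  have hfi : Integrable f := by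
    have i1 : IntegrableOn f (Set.Ioi 0) :=
      (integrableOn_exp_mul_complex_Ioi (a := -l) (by simpa using hl) 0).congr_fun
        (fun x (hx : 0 < x) => by simp [hf, abs_of_pos hx]) measurableSet_Ioi
    have i2 : IntegrableOn f (Set.Iic 0) :=
      (integrableOn_exp_mul_complex_Iic (a := l) (by simpa using hl) 0).congr_fun
        (fun x (hx : x ≤ 0) => by simp [hf, abs_of_nonpos hx]) measurableSet_Iic
    rw [← integrableOn_univ, ← Set.Iic_union_Ioi (a := (0 : ℝ))]
    exact i2.union i1
  have hFi : Integrable (𝓕 f) := by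
    rw [hF]
    exact (((integrable_kernel hl).comp_mul_right' (by positivity)).const_mul _).ofReal
  have key := congrFun (hc.fourierInv_fourier_eq hfi hFi) (m : ℝ)
  rw [hF, Real.fourierInv_eq'] at key
  set g : ℝ → ℂ := fun θ => Complex.exp (θ * Complex.I) ^ m * ((1 / (l ^ 2 + θ ^ 2) : ℝ) : ℂ)
  have hg : ∀ v : ℝ, Complex.exp (↑(2 * Real.pi * inner ℝ v (m : ℝ)) * Complex.I) •
      ((2 * l * (1 / (l ^ 2 + (v * (2 * Real.pi)) ^ 2)) : ℝ) : ℂ)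
      = (2 * l : ℂ) * g (v * (2 * Real.pi)) := fun v => by
    simp only [g, ← Complex.exp_nat_mul, smul_eq_mul]
    rw [show ((2 * Real.pi * inner ℝ v (m : ℝ) : ℝ) : ℂ) * Complex.I
      = m * (((v * (2 * Real.pi) : ℝ) : ℂ) * Complex.I) by simp; ring]
    push_cast; ring
  simp_rw [hg] at key
  rw [integral_const_mul, Measure.integral_comp_mul_right g] at key
  have hexp : f m = Complex.exp (-l) ^ m := by
    simp only [hf, ← Complex.exp_nat_mul]
    congr 1; simp; ring
  rw [hexp, abs_of_pos (by positivity), Complex.real_smul] at key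
  rw [← key]
  have : (l : ℂ) ≠ 0 := by exact_mod_cast hl.ne'
  have : (Real.pi : ℂ) ≠ 0 := by exact_mod_cast Real.pi_ne_zero
  push_cast
  field_simp

theorem stmt18 (a : ℝ) (ha : 0 < a) (n : ℕ) (hn : 1 ≤ n)
    (t : Fin n → ℝ) (ht : ∀ k, t k ∈ Set.Ioo 0 a)
    (l : ℝ) (hl : 0 < l) :
    (∫ θ in Set.Ici (0:ℝ),
        (Real.cos (∑ k, Real.arctan (t k * Real.sin θ / (a - t k * Real.cos θ)))
          / ∏ k, Real.sqrt (a ^ 2 - 2 * a * t k * Real.cos θ + t k ^ 2))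
          / (l ^ 2 + θ ^ 2))
      = Real.pi / (2 * l) * ∏ k, 1 / (a - t k * Real.exp (-l)) := by
  obtain ⟨c, hc, hw⟩ := exists_series a t ht
  set K : ℝ → ℝ := fun θ => 1 / (l ^ 2 + θ ^ 2) with hK
  have hKi : Integrable K := integrable_kernel hl
  have hK0 : ∀ θ, 0 ≤ K θ := fun θ => by positivity
  set F : ℕ → ℝ → ℂ := fun m θ => c m * (Complex.exp (θ * Complex.I) ^ m * (K θ : ℂ)) with hFdef
  have hnorm : ∀ m θ, ‖F m θ‖ = ‖c m‖ * K θ := fun m θ => by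
    simp only [hFdef, norm_mul, norm_pow, Complex.norm_exp_ofReal_mul_I, one_pow, one_mul,
      Complex.norm_real, Real.norm_of_nonneg (hK0 θ)]
  have hFi : ∀ m, Integrable (F m) := fun m => by
    refine Integrable.mono' (hKi.const_mul ‖c m‖) ?_ (ae_of_all _ fun θ => (hnorm m θ).le)
    exact ((by fun_prop : Continuous fun θ : ℝ =>
      Complex.exp (θ * Complex.I) ^ m).aestronglyMeasurable.mul
        hKi.ofReal.aestronglyMeasurable).const_mul (c m)
  have hsum := hasSum_integral_of_summable_integral_norm hFi (by
    simp_rw [hnorm, integral_const_mul]; exact hc.mul_right _)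
  have hF1 : ∀ m, ∫ θ, F m θ = (Real.pi / l : ℝ) * (c m * Complex.exp (-l) ^ m) := fun m => by
    rw [integral_const_mul, integral_kernel hl]; ring
  have hF2 : ∀ θ : ℝ, ∑' m, F m θ =
      (∏ k, (1 : ℂ) / (a - t k * Complex.exp (θ * Complex.I))) * K θ := fun θ => by
    rw [← hw _ (Complex.norm_exp_ofReal_mul_I θ).le, ← tsum_mul_right]
    simp only [hFdef, mul_assoc]
  have hle : ‖Complex.exp (-l)‖ ≤ 1 := by
    rw [Complex.norm_exp]; simpa using hl.le
  have main := hsum.tsum_eq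
  simp_rw [hF1] at main
  rw [tsum_mul_left, hw _ hle] at main
  have hGi : Integrable fun θ => ∑' m, F m θ := by
    refine Integrable.mono' (hKi.const_mul (∑' m, ‖c m‖)) ?_ (ae_of_all _ fun θ => ?_)
    · simp_rw [hF2, hK]
      exact Measurable.aestronglyMeasurable (by fun_prop)
    · have : Summable fun m => ‖F m θ‖ := by simp_rw [hnorm]; exact hc.mul_right _
      refine (norm_tsum_le_tsum_norm this).trans ?_
      simp_rw [hnorm]; rw [tsum_mul_right]
  have hre := integral_re hGi
  simp only [RCLike.re_eq_complex_re] at hre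
  set G : ℝ → ℝ := fun θ =>
    (Real.cos (∑ k, Real.arctan (t k * Real.sin θ / (a - t k * Real.cos θ)))
          / ∏ k, Real.sqrt (a ^ 2 - 2 * a * t k * Real.cos θ + t k ^ 2))
          / (l ^ 2 + θ ^ 2) with hG
  have hreG : ∀ θ, (∑' m, F m θ).re = G θ := fun θ => by
    rw [hF2, Complex.re_mul_ofReal, re_prod a θ t ht, hK, hG]; ring
  have heven : ∀ θ, G |θ| = G θ := fun θ => by
    rcases abs_choice θ with h | h <;> rw [h]
    simp only [hG, Real.sin_neg, Real.cos_neg, mul_neg, neg_div, Real.arctan_neg,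
      Finset.sum_neg_distrib, neg_sq]
  have habs := integral_comp_abs (f := G)
  simp_rw [heven] at habs
  simp_rw [hreG] at hre
  rw [integral_Ici_eq_integral_Ioi]
  have hreal : ((Real.pi / l : ℝ) : ℂ) * ∏ k, (1 : ℂ) / (a - t k * Complex.exp (-l)) =
      ((Real.pi / l * ∏ k, 1 / (a - t k * Real.exp (-l)) : ℝ) : ℂ) := by
    push_cast; rfl
  rw [← main, hreal, Complex.ofReal_re, habs] at hre
  have : ∫ θ in Set.Ioi (0:ℝ), G θ = (Real.pi / l * ∏ k, 1 / (a - t k * Real.exp (-l))) / 2 := by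
    linarith
  rw [this]; ring
end

section
/- For every integer m ≥ 1 and every λ > 0, the improper integral ∫₀^∞ x·B_{2m−1}({x})/(λ² + x²) dx converges and equals (−1)^m·((2m−1)!/(2·(2π)^{2m−2}))·Li_{2m−1}(e^{−2πλ}), where B_k denotes the k-th Bernoulli polynomial, {x} the fractional part of x, and Li_k(z) = Σ_{n=1}^∞ z^n/n^k the polylogarithm of order k. -/
open MeasureTheory Filter Topology

/-!
Write `g x = x / (l ^ 2 + x ^ 2)`. The integral of `g x * B_{2m-1}({x})` converges only
conditionally, so it is first integrated by parts: `B_{2m}({x})` is continuous (`2m ≠ 1`) and has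
derivative `2m * B_{2m-1}({x})` off the integers, hence
`2m * ∫₀^a g x * B_{2m-1}({x}) = g a * B_{2m}({a}) - ∫₀^a g' x * B_{2m}({x})`.
The boundary term tends to `0`, and `g'` is absolutely integrable.

The Fourier series of `B_{2m}({x})`, a constant times `∑ cos (2πnx) / n ^ (2m)`, converges
absolutely, so dominated convergence allows integration term by term
(`hasSum_integral_kernelDeriv`). It remains to know the cosine transform
`∫₀^∞ g' x * cos (2πnx) = π² n exp (-2πln)` (`integral_kernelDeriv_mul_cos`). Since
`g' x = Re (1 / (l + i x) ^ 2)`, the elementary integral `∫₀^∞ t exp (-z t) = 1 / z ^ 2` shows that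
`g' / (2π²)` is the Fourier transform of `|t| exp (-2πl|t|)`; Fourier inversion at `t = n` gives
the value.
-/

/-! ### The kernel and its derivative -/

/-- The derivative of `x ↦ x / (l ^ 2 + x ^ 2)`. -/
noncomputable def kernelDeriv (l x : ℝ) : ℝ := (l ^ 2 - x ^ 2) / (l ^ 2 + x ^ 2) ^ 2

lemma hasDerivAt_kernel {l : ℝ} (hl : 0 < l) (x : ℝ) :
    HasDerivAt (fun x : ℝ => x / (l ^ 2 + x ^ 2)) (kernelDeriv l x) x := by
  have h0 : l ^ 2 + x ^ 2 ≠ 0 := by positivity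
  have := (hasDerivAt_id x).fun_div (((hasDerivAt_id x).fun_pow 2).const_add (l ^ 2)) h0
  refine this.congr_deriv ?_
  simp only [kernelDeriv, id]
  congr 1
  push_cast
  ring

lemma continuous_kernelDeriv {l : ℝ} (hl : 0 < l) : Continuous (kernelDeriv l) := by
  unfold kernelDeriv
  exact Continuous.div (by fun_prop) (by fun_prop) (fun x => by positivity)

lemma integrable_kernelDeriv {l : ℝ} (hl : 0 < l) : Integrable (kernelDeriv l) := by
  have hc : 0 < min 1 (l ^ 2) := by positivity
  refine (integrable_inv_one_add_sq.const_mul (min 1 (l ^ 2))⁻¹).mono'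
    (continuous_kernelDeriv hl).aestronglyMeasurable (Eventually.of_forall fun x => ?_)
  have h1 : min 1 (l ^ 2) ≤ 1 := min_le_left _ _
  have h2 : min 1 (l ^ 2) ≤ l ^ 2 := min_le_right _ _
  set c := min 1 (l ^ 2)
  have hb : c * (1 + x ^ 2) ≤ l ^ 2 + x ^ 2 := by nlinarith [sq_nonneg x]
  have hp : 0 < l ^ 2 + x ^ 2 := by positivity
  calc ‖kernelDeriv l x‖ = |l ^ 2 - x ^ 2| / (l ^ 2 + x ^ 2) ^ 2 := by
        rw [kernelDeriv, Real.norm_eq_abs, abs_div, abs_of_pos (pow_pos hp 2)]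
    _ ≤ (l ^ 2 + x ^ 2) / (l ^ 2 + x ^ 2) ^ 2 := by
        gcongr
        exact abs_le.2 ⟨by nlinarith [sq_nonneg x, sq_nonneg l], by nlinarith [sq_nonneg x]⟩
    _ = (l ^ 2 + x ^ 2)⁻¹ := by field_simp
    _ ≤ (c * (1 + x ^ 2))⁻¹ := by gcongr
    _ = c⁻¹ * (1 + x ^ 2)⁻¹ := mul_inv _ _

/-! ### The Laplace integral of `t` -/

lemma integrableOn_mul_exp {b : ℝ} (hb : 0 < b) :
    IntegrableOn (fun t : ℝ => t * Real.exp (-b * t)) (Set.Ioi 0) := by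
  simpa using integrableOn_rpow_mul_exp_neg_mul_rpow (s := 1) (p := 1) (b := b)
    (by norm_num) one_pos hb

lemma integrableOn_mul_cexp {z : ℂ} (hz : 0 < z.re) :
    IntegrableOn (fun t : ℝ => (t : ℂ) * Complex.exp (-z * t)) (Set.Ioi 0) := by
  refine (integrableOn_mul_exp hz).mono' (Continuous.aestronglyMeasurable (by fun_prop)) ?_
  refine (ae_restrict_iff' measurableSet_Ioi).2 (Eventually.of_forall fun t ht => ?_)
  simp [Complex.norm_exp, abs_of_pos (Set.mem_Ioi.1 ht)]

lemma integral_mul_cexp {z : ℂ} (hz : 0 < z.re) :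
    ∫ t : ℝ in Set.Ioi 0, (t : ℂ) * Complex.exp (-z * t) = 1 / z ^ 2 := by
  have hz0 : z ≠ 0 := by rintro rfl; simp at hz
  have hd : ∀ x ∈ Set.Ici (0 : ℝ), HasDerivAt
      (fun t : ℝ => -((t : ℂ) / z + 1 / z ^ 2) * Complex.exp (-z * t))
      ((x : ℂ) * Complex.exp (-z * x)) x := by
    intro x _
    have h : HasDerivAt (fun t : ℂ => -(t / z + 1 / z ^ 2) * Complex.exp (-z * t))
        ((x : ℂ) * Complex.exp (-z * x)) x := by
      have h1 := (((hasDerivAt_id (x : ℂ)).div_const z).add_const (1 / z ^ 2)).fun_neg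
      have h2 := ((hasDerivAt_id (x : ℂ)).const_mul (-z)).cexp
      refine (h1.fun_mul h2).congr_deriv ?_
      simp only [id]
      field_simp
      ring
    exact h.comp_ofReal
  have ht : Tendsto (fun t : ℝ => -((t : ℂ) / z + 1 / z ^ 2) * Complex.exp (-z * t)) atTop
      (𝓝 0) := by
    have e0 : Tendsto (fun t : ℝ => Complex.exp (-z * t)) atTop (𝓝 0) := by
      rw [tendsto_zero_iff_norm_tendsto_zero]
      have := tendsto_rpow_mul_exp_neg_mul_atTop_nhds_zero 0 z.re hz
      simpa [Complex.norm_exp] using this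
    have e1 : Tendsto (fun t : ℝ => (t : ℂ) * Complex.exp (-z * t)) atTop (𝓝 0) := by
      rw [tendsto_zero_iff_norm_tendsto_zero]
      have := (tendsto_rpow_mul_exp_neg_mul_atTop_nhds_zero 1 z.re hz).norm
      simpa [Complex.norm_exp] using this
    have := ((e1.const_mul (1 / z)).add (e0.const_mul (1 / z ^ 2))).neg
    simp only [mul_zero, add_zero, neg_zero] at this
    refine this.congr fun t => ?_
    ring
  rw [integral_Ioi_of_hasDerivAt_of_tendsto' hd (integrableOn_mul_cexp hz) ht]
  simp

/-! ### Fourier inversion and the cosine transform of the kernel derivative -/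

/-- The complex-valued function `|t| exp (-2πl|t|)`, whose Fourier transform is
`kernelDeriv l / (2π²)`; the `2πl` matches Mathlib's normalization `exp (-2πi t w)` of `𝓕`. -/
noncomputable def absExp (l t : ℝ) : ℂ := ((|t| * Real.exp (-(2 * Real.pi * l) * |t|) : ℝ) : ℂ)

lemma continuous_absExp (l : ℝ) : Continuous (absExp l) := by
  unfold absExp; fun_prop

lemma integrable_of_Ioi {f : ℝ → ℂ} (h1 : IntegrableOn f (Set.Ioi 0))
    (h2 : IntegrableOn (fun t => f (-t)) (Set.Ioi 0)) : Integrable f := by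
  have h3 : IntegrableOn f (Set.Iic 0) := by
    have := h2.comp_neg
    simp only [neg_neg, Set.neg_Ioi, neg_zero] at this
    rwa [integrableOn_Iic_iff_integrableOn_Iio]
  rw [← integrableOn_univ, ← Set.Iic_union_Ioi (a := (0 : ℝ))]
  exact h3.union h1

lemma integral_eq_Ioi_add {f : ℝ → ℂ} (h1 : IntegrableOn f (Set.Ioi 0))
    (h2 : IntegrableOn (fun t => f (-t)) (Set.Ioi 0)) :
    ∫ t, f t = (∫ t in Set.Ioi 0, f t) + ∫ t in Set.Ioi 0, f (-t) := by
  have h := integrable_of_Ioi h1 h2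
  rw [← intervalIntegral.integral_Iic_add_Ioi (b := 0) h.integrableOn h.integrableOn,
    integral_comp_neg_Ioi, neg_zero, add_comm]

lemma integrable_absExp {l : ℝ} (hl : 0 < l) : Integrable (absExp l) := by
  have h : IntegrableOn (absExp l) (Set.Ioi 0) := by
    refine IntegrableOn.congr_fun (integrableOn_mul_exp (b := 2 * Real.pi * l)
      (by positivity)).ofReal (fun t ht => ?_) measurableSet_Ioi
    simp [absExp, abs_of_pos (Set.mem_Ioi.1 ht)]
  have he : (fun t => absExp l (-t)) = absExp l := by
    funext t
    simp only [absExp, abs_neg]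
  exact integrable_of_Ioi h (by rwa [he])

open FourierTransform in
lemma fourier_absExp {l : ℝ} (hl : 0 < l) (w : ℝ) :
    𝓕 (absExp l) w = ((1 / (2 * Real.pi ^ 2) * kernelDeriv l w : ℝ) : ℂ) := by
  set z : ℂ := 2 * Real.pi * (l + w * Complex.I) with hz
  set z' : ℂ := 2 * Real.pi * (l - w * Complex.I) with hz'
  have hzr : 0 < z.re := by simp [hz]; positivity
  have hzr' : 0 < z'.re := by simp [hz']; positivity
  have c1 : ∀ t ∈ Set.Ioi (0 : ℝ), (t : ℂ) * Complex.exp (-z * t) =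
      Complex.exp (↑(-2 * Real.pi * t * w) * Complex.I) • absExp l t := by
    intro t ht
    simp only [absExp, abs_of_pos (Set.mem_Ioi.1 ht), smul_eq_mul]
    push_cast
    rw [mul_left_comm, ← Complex.exp_add]
    congr 2
    rw [hz]; ring
  have c2 : ∀ t ∈ Set.Ioi (0 : ℝ), (t : ℂ) * Complex.exp (-z' * t) =
      Complex.exp (↑(-2 * Real.pi * (-t) * w) * Complex.I) • absExp l (-t) := by
    intro t ht
    simp only [absExp, abs_neg, abs_of_pos (Set.mem_Ioi.1 ht), smul_eq_mul]
    push_cast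
    rw [mul_left_comm, ← Complex.exp_add]
    congr 2
    rw [hz']; ring
  rw [Real.fourier_real_eq_integral_exp_smul, integral_eq_Ioi_add
    ((integrableOn_mul_cexp hzr).congr_fun c1 measurableSet_Ioi)
    ((integrableOn_mul_cexp hzr').congr_fun c2 measurableSet_Ioi),
    ← setIntegral_congr_fun measurableSet_Ioi c1, ← setIntegral_congr_fun measurableSet_Ioi c2,
    integral_mul_cexp hzr, integral_mul_cexp hzr']
  have n1 : (l + w * Complex.I : ℂ) ≠ 0 := by
    intro h; have := congrArg Complex.re h; simp at this; exact hl.ne' this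
  have n2 : (l - w * Complex.I : ℂ) ≠ 0 := by
    intro h; have := congrArg Complex.re h; simp at this; exact hl.ne' this
  have n3 : (Real.pi : ℂ) ≠ 0 := by exact_mod_cast Real.pi_ne_zero
  have e : (l : ℂ) ^ 2 + w ^ 2 = (l + w * Complex.I) * (l - w * Complex.I) := by
    linear_combination ((w : ℂ) ^ 2) * Complex.I_sq
  rw [kernelDeriv]
  push_cast
  rw [e, hz, hz']
  field_simp
  linear_combination (2 * (w : ℂ) ^ 2) * Complex.I_sq

open FourierTransform in
/-- The cosine transform of `kernelDeriv`, from Fourier inversion for `absExp l` at `n`. -/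
lemma integral_kernelDeriv_mul_cos {l : ℝ} (hl : 0 < l) (n : ℕ) :
    ∫ x in Set.Ioi (0 : ℝ), kernelDeriv l x * Real.cos (2 * Real.pi * n * x) =
      Real.pi ^ 2 * (n * Real.exp (-2 * Real.pi * l) ^ n) := by
  have hF : 𝓕 (absExp l) = fun w => ((1 / (2 * Real.pi ^ 2) * kernelDeriv l w : ℝ) : ℂ) :=
    funext (fourier_absExp hl)
  have hi : Integrable (𝓕 (absExp l)) := by
    rw [hF]; exact ((integrable_kernelDeriv hl).const_mul _).ofReal
  have key := congrFun ((continuous_absExp l).fourierInv_fourier_eq (integrable_absExp hl) hi) n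
  rw [Real.fourierInv_eq', hF] at key
  have hint : Integrable fun v : ℝ => Complex.exp (↑(2 * Real.pi * inner ℝ v (n : ℝ)) * Complex.I) •
      ((1 / (2 * Real.pi ^ 2) * kernelDeriv l v : ℝ) : ℂ) := by
    refine (((integrable_kernelDeriv hl).const_mul (1 / (2 * Real.pi ^ 2))).norm).mono'
      (Continuous.aestronglyMeasurable ?_) (Eventually.of_forall fun v => ?_)
    · have := continuous_kernelDeriv hl
      fun_prop
    · rw [norm_smul, Complex.norm_exp_ofReal_mul_I, one_mul, Complex.norm_real]
  have key2 := congrArg Complex.re key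
  rw [← RCLike.re_eq_complex_re, ← integral_re hint] at key2
  have e1 : ∀ v : ℝ, RCLike.re (Complex.exp (↑(2 * Real.pi * inner ℝ v (n : ℝ)) * Complex.I) •
      ((1 / (2 * Real.pi ^ 2) * kernelDeriv l v : ℝ) : ℂ)) =
      1 / (2 * Real.pi ^ 2) * (kernelDeriv l |v| * Real.cos (2 * Real.pi * n * |v|)) := by
    intro v
    have : Real.cos (2 * Real.pi * n * |v|) = Real.cos (2 * Real.pi * (n * v)) := by
      rcases abs_cases v with ⟨h, _⟩ | ⟨h, _⟩ <;> rw [h]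
      · ring_nf
      · rw [← Real.cos_neg]; ring_nf
    rw [this, smul_eq_mul, RCLike.re_eq_complex_re, Complex.re_mul_ofReal,
      Complex.exp_ofReal_mul_I_re]
    simp only [kernelDeriv, sq_abs, RCLike.inner_apply]
    simp
    ring
  simp_rw [e1] at key2
  rw [integral_const_mul, integral_comp_abs (f := fun x => kernelDeriv l x *
    Real.cos (2 * Real.pi * n * x))] at key2
  have e2 : RCLike.re (absExp l n) = n * Real.exp (-2 * Real.pi * l) ^ n := by
    rw [absExp, RCLike.re_eq_complex_re, Complex.ofReal_re, ← Real.exp_nat_mul]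
    simp only [Nat.abs_cast]
    ring_nf
  rw [e2] at key2
  rw [← key2]
  field_simp

/-! ### Periodized Bernoulli functions and integration by parts -/

lemma continuous_bernoulliFun_fract {k : ℕ} (hk : k ≠ 1) :
    Continuous fun x : ℝ => bernoulliFun k (Int.fract x) :=
  (continuous_bernoulliFun k).continuousOn.comp_fract''
    (bernoulliFun_endpoints_eq_of_ne_one hk).symm

/-- Off the integers `⌊·⌋` is locally constant, so `B_k({x})` is locally a translate of `B_k`. -/
lemma hasDerivAt_bernoulliFun_fract (k : ℕ) {x : ℝ} (hx : x ∉ Set.range ((↑) : ℤ → ℝ)) :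
    HasDerivAt (fun x : ℝ => bernoulliFun k (Int.fract x))
      (k * bernoulliFun (k - 1) (Int.fract x)) x := by
  have h := (hasDerivAt_bernoulliFun k (Int.fract x)).comp_sub_const x (⌊x⌋ : ℝ)
  refine h.congr_of_eventuallyEq ?_
  have h1 : (⌊x⌋ : ℝ) < x := lt_of_le_of_ne (Int.floor_le x) fun h => hx ⟨_, h⟩
  filter_upwards [Ioo_mem_nhds h1 (Int.lt_floor_add_one x)] with y hy
  rw [Int.fract, Int.floor_eq_iff.2 ⟨hy.1.le, hy.2⟩]

/-- `B_k({x})` is bounded, being the values of a polynomial on `[0, 1]`. -/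
lemma exists_bound_bernoulliFun_fract (k : ℕ) :
    ∃ C : ℝ, ∀ x : ℝ, ‖bernoulliFun k (Int.fract x)‖ ≤ C := by
  obtain ⟨C, hC⟩ := isCompact_Icc.exists_bound_of_continuousOn (s := Set.Icc (0 : ℝ) 1)
    (continuous_bernoulliFun k).continuousOn
  exact ⟨C, fun x => hC _ ⟨Int.fract_nonneg x, (Int.fract_lt_one x).le⟩⟩

lemma intervalIntegrable_bernoulliFun_fract (k : ℕ) {l : ℝ} (hl : 0 < l) (a b : ℝ) :
    IntervalIntegrable (fun x : ℝ => x / (l ^ 2 + x ^ 2) * bernoulliFun k (Int.fract x))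
      volume a b := by
  obtain ⟨C, hC⟩ := exists_bound_bernoulliFun_fract k
  have hg : Continuous fun x : ℝ => x / (l ^ 2 + x ^ 2) :=
    continuous_id.div (by fun_prop) fun x => by positivity
  refine IntervalIntegrable.mono_fun' (g := fun x => ‖x / (l ^ 2 + x ^ 2)‖ * C)
    ((hg.norm.mul continuous_const).intervalIntegrable a b) ?_
    (Eventually.of_forall fun x => ?_)
  · exact (hg.measurable.mul
      ((continuous_bernoulliFun k).measurable.comp measurable_fract)).aestronglyMeasurable
  · simp only [norm_mul]
    gcongr
    exact hC x

/-- Integration by parts against the antiderivative `B_k({x})` of `k * B_{k-1}({x})`; for `k ≠ 1` it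
is continuous across the integers, so the countably many corners do not contribute. -/
lemma integral_by_parts {k : ℕ} (hk : k ≠ 1) {l : ℝ} (hl : 0 < l) (a : ℝ) :
    k * ∫ x in (0 : ℝ)..a, x / (l ^ 2 + x ^ 2) * bernoulliFun (k - 1) (Int.fract x) =
      a / (l ^ 2 + a ^ 2) * bernoulliFun k (Int.fract a) -
        ∫ x in (0 : ℝ)..a, kernelDeriv l x * bernoulliFun k (Int.fract x) := by
  have hP := continuous_bernoulliFun_fract hk
  have hg : Continuous fun x : ℝ => x / (l ^ 2 + x ^ 2) :=
    continuous_id.div (by fun_prop) fun x => by positivity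
  have i1 := ((continuous_kernelDeriv hl).fun_mul hP).intervalIntegrable (μ := volume) 0 a
  have i2 := (intervalIntegrable_bernoulliFun_fract (k - 1) hl 0 a).const_mul (k : ℝ)
  have h := integral_eq_of_hasDerivAt_off_countable
    (fun x : ℝ => x / (l ^ 2 + x ^ 2) * bernoulliFun k (Int.fract x))
    (fun x => kernelDeriv l x * bernoulliFun k (Int.fract x) +
      k * (x / (l ^ 2 + x ^ 2) * bernoulliFun (k - 1) (Int.fract x)))
    (Set.countable_range ((↑) : ℤ → ℝ)) (hg.mul hP).continuousOn
    (fun x hx => ((hasDerivAt_kernel hl x).fun_mul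
      (hasDerivAt_bernoulliFun_fract k hx.2)).congr_deriv (by ring)) (i1.add i2)
  rw [intervalIntegral.integral_add i1 i2, intervalIntegral.integral_const_mul] at h
  simp only [zero_div, zero_mul, sub_zero] at h
  linarith

lemma integrable_kernelDeriv_mul_bernoulliFun (k : ℕ) {l : ℝ} (hl : 0 < l) :
    Integrable fun x => kernelDeriv l x * bernoulliFun k (Int.fract x) := by
  obtain ⟨C, hC⟩ := exists_bound_bernoulliFun_fract k
  exact (integrable_kernelDeriv hl).mul_bdd
    ((continuous_bernoulliFun k).measurable.comp measurable_fract).aestronglyMeasurable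
    (Eventually.of_forall hC)

lemma tendsto_boundary (k : ℕ) (l : ℝ) :
    Tendsto (fun a : ℝ => a / (l ^ 2 + a ^ 2) * bernoulliFun k (Int.fract a)) atTop (𝓝 0) := by
  obtain ⟨C, hC⟩ := exists_bound_bernoulliFun_fract k
  refine squeeze_zero_norm' (a := fun a : ℝ => a⁻¹ * C) ?_
    (by simpa using tendsto_inv_atTop_zero.mul_const C)
  filter_upwards [eventually_gt_atTop 0] with a ha
  rw [norm_mul]
  refine mul_le_mul ?_ (hC a) (norm_nonneg _) (by positivity)
  rw [Real.norm_of_nonneg (by positivity), div_le_iff₀ (by positivity)]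
  have : a⁻¹ * (l ^ 2 + a ^ 2) = a + a⁻¹ * l ^ 2 := by field_simp; ring
  rw [this]
  have : 0 ≤ a⁻¹ * l ^ 2 := by positivity
  linarith

/-! ### Termwise integration of the Fourier series -/

/-- The Fourier series of the even Bernoulli functions, on all of `ℝ` by periodicity. -/
lemma hasSum_cos_bernoulliFun_fract {m : ℕ} (hm : m ≠ 0) (x : ℝ) :
    HasSum (fun n : ℕ => 1 / (n : ℝ) ^ (2 * m) * Real.cos (2 * Real.pi * n * x))
      ((-1) ^ (m + 1) * (2 * Real.pi) ^ (2 * m) / 2 / (2 * m).factorial *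
        bernoulliFun (2 * m) (Int.fract x)) := by
  have h := hasSum_one_div_nat_pow_mul_cos hm
    (x := Int.fract x) ⟨Int.fract_nonneg x, (Int.fract_lt_one x).le⟩
  rw [bernoulliFun]
  convert h using 3 with n
  rw [← Real.cos_sub_int_mul_two_pi (2 * Real.pi * n * x) (n * ⌊x⌋), Int.fract]
  push_cast
  ring_nf

/-- Termwise integration of the Fourier series of `B_{2m}({x})` against `kernelDeriv`. -/
lemma hasSum_integral_kernelDeriv {m : ℕ} (hm : m ≠ 0) {l : ℝ} (hl : 0 < l) :
    HasSum (fun n : ℕ => Real.pi ^ 2 *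
        (Real.exp (-2 * Real.pi * l) ^ (n + 1) / (n + 1 : ℝ) ^ (2 * m - 1)))
      ((-1) ^ (m + 1) * (2 * Real.pi) ^ (2 * m) / 2 / (2 * m).factorial *
        ∫ x in Set.Ioi (0 : ℝ), kernelDeriv l x * bernoulliFun (2 * m) (Int.fract x)) := by
  have hs : Summable fun n : ℕ => 1 / (n : ℝ) ^ (2 * m) :=
    Real.summable_one_div_nat_pow.2 (by omega)
  have h := hasSum_integral_of_dominated_convergence
    (μ := volume.restrict (Set.Ioi (0 : ℝ)))
    (F := fun (n : ℕ) x => kernelDeriv l x *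
      (1 / (n : ℝ) ^ (2 * m) * Real.cos (2 * Real.pi * n * x)))
    (fun (n : ℕ) x => ‖kernelDeriv l x‖ * (1 / (n : ℝ) ^ (2 * m)))
    (fun n => ((continuous_kernelDeriv hl).mul (by fun_prop)).aestronglyMeasurable)
    (fun n => Eventually.of_forall fun x => ?_)
    (Eventually.of_forall fun x => hs.mul_left _)
    (by
      simp_rw [tsum_mul_left]
      exact ((integrable_kernelDeriv hl).norm.mul_const _).integrableOn)
    (Eventually.of_forall fun x => (hasSum_cos_bernoulliFun_fract hm x).mul_left _)
  -- The series is indexed from `n = 0`, where `1 / 0 ^ (2 * m) = 0`, so that term can be dropped.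
  · rw [← hasSum_nat_add_iff' 1] at h
    refine (congrArg₂ (fun f c => HasSum f c) (funext fun n => ?_) ?_).mpr h
    · have e : ∀ x : ℝ, kernelDeriv l x * (1 / ((n + 1 : ℕ) : ℝ) ^ (2 * m) *
          Real.cos (2 * Real.pi * (n + 1 : ℕ) * x)) = 1 / ((n + 1 : ℕ) : ℝ) ^ (2 * m) *
          (kernelDeriv l x * Real.cos (2 * Real.pi * (n + 1 : ℕ) * x)) := fun x => by ring
      simp_rw [e]
      rw [integral_const_mul, integral_kernelDeriv_mul_cos hl,
        show 2 * m = 2 * m - 1 + 1 by omega, pow_succ]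
      push_cast
      have : (n + 1 : ℝ) ≠ 0 := by positivity
      field_simp
      rw [pow_succ, mul_comm]
    · rw [← integral_const_mul]
      simp [hm, mul_left_comm]
  · rw [norm_mul, norm_mul, Real.norm_of_nonneg (by positivity : 0 ≤ 1 / (n : ℝ) ^ (2 * m))]
    gcongr
    exact mul_le_of_le_one_right (by positivity) (Real.abs_cos_le_one _)

/-! ### Evaluation of the improper integral -/

theorem stmt19 (m : ℕ) (hm : 1 ≤ m) (l : ℝ) (hl : 0 < l) :
    Tendsto (fun a : ℝ => ∫ x in (0:ℝ)..a,
        x * (Polynomial.aeval (Int.fract x) (Polynomial.bernoulli (2 * m - 1)) : ℝ)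
          / (l ^ 2 + x ^ 2)) atTop
      (𝓝 ((-1 : ℝ) ^ m * ((2 * m - 1).factorial / (2 * (2 * Real.pi) ^ (2 * m - 2))) *
        ∑' k : ℕ, Real.exp (-2 * Real.pi * l) ^ (k + 1) / (k + 1 : ℝ) ^ (2 * m - 1))) := by
  have hm0 : m ≠ 0 := by omega
  have hm' : (m : ℝ) ≠ 0 := by exact_mod_cast hm0
  have hsum := (hasSum_integral_kernelDeriv hm0 hl).tsum_eq
  rw [tsum_mul_left] at hsum
  have hlim := ((tendsto_boundary (2 * m) l).sub (intervalIntegral_tendsto_integral_Ioi 0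
    (integrable_kernelDeriv_mul_bernoulliFun (2 * m) hl).integrableOn tendsto_id)).const_mul
    (((2 * m : ℕ) : ℝ)⁻¹)
  convert hlim using 2 with a
  · rw [id, ← integral_by_parts (by omega) hl a, inv_mul_cancel_left₀ (by positivity)]
    congr 1
    funext x
    rw [bernoulliFun, Polynomial.eval_map_algebraMap]
    ring
  · obtain ⟨j, rfl⟩ : ∃ j, m = j + 1 := ⟨m - 1, by omega⟩
    set S := ∑' k : ℕ, Real.exp (-2 * Real.pi * l) ^ (k + 1) /
      (k + 1 : ℝ) ^ (2 * (j + 1) - 1) with hS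
    set J := ∫ x in Set.Ioi (0 : ℝ), kernelDeriv l x *
      bernoulliFun (2 * (j + 1)) (Int.fract x) with hJ
    have hpi := Real.pi_ne_zero
    have hS' : S = ((-1) ^ (j + 1 + 1) * (2 * Real.pi) ^ (2 * (j + 1)) / 2 /
        (2 * (j + 1)).factorial * J) / Real.pi ^ 2 := by
      rw [← hsum]; field_simp
    rw [hS', show 2 * (j + 1) - 1 = 2 * j + 1 by omega, show 2 * (j + 1) - 2 = 2 * j by omega,
      show 2 * (j + 1) = 2 * j + 1 + 1 by ring, Nat.factorial_succ (2 * j + 1)]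
    have hf : ((2 * j + 1).factorial : ℝ) ≠ 0 := by positivity
    have hsg : ((-1 : ℝ) ^ j) ^ 2 = 1 := by rw [← pow_mul, mul_comm, pow_mul]; simp
    push_cast
    have hj : (2 * j + 1 + 1 : ℝ) ≠ 0 := by positivity
    simp only [pow_succ (-1 : ℝ), pow_succ (2 * Real.pi)]
    field_simp
    linear_combination (-J) * hsg
end
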